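/- arXiv:1205.2803 — 6 statements merged into one kernel-verified Lean document; each statement's English description precedes it below -/
import Mathlib

section
/- Energy balance for the 1D Wigner–BGK equation: let ħ > 0, τ > 0, let V : ℝ → ℝ be a Schwartz function, and let t ↦ f(t) be a continuously differentiable curve in the Schwartz space S(ℝ^2) of real-valued functions of (x,v), such that for all t, x, v: ∂f/∂t + v ∂f/∂x + (Θ[V] f(t,x,·))(v) = (f_eq - f)/τ, where ρ(t,x) = ∫_ℝ f(t,x,v) dv > 0, ρ u = ∫_ℝ v f dv, ρ T = ∫_ℝ (v-u)^2 f dv with T(t,x) > 0, and f_eq(t,x,v) = ρ (2π T)^{-1/2} exp(-(v-u)^2/(2T)). Then d/dt ∫_ℝ ∫_ℝ v^2 f(t,x,v) dx dv = -2 ∫_ℝ ρ(t,x) u(t,x) V'(x) dx. -/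
open MeasureTheory Complex

/-- The one-dimensional nonlocal Wigner potential operator
`(Θ[V]f)(x,v) = (-i)/(2πℏ²) ∫ [V(x+y/2) - V(x-y/2)] e^{iyv/ℏ} (∫ f(w) e^{-iyw/ℏ} dw) dy`. -/
noncomputable def wignerTheta (ℏ : ℝ) (V : ℝ → ℝ) (f : ℝ → ℂ) (x v : ℝ) : ℂ :=
  (-Complex.I) / (2 * Real.pi * ℏ ^ 2) *
    ∫ y : ℝ, ((V (x + y / 2) - V (x - y / 2) : ℝ) : ℂ) *
      Complex.exp (Complex.I * y * v / ℏ) *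
      ∫ w : ℝ, f w * Complex.exp (-Complex.I * y * w / ℏ)

namespace WBGK
open Set Filter Topology

/-- One-sided fundamental theorem of calculus along a closed set. -/
lemma ftc_closed_le (F : Set ℝ) (hF : IsClosed F) {c d : ℝ} (hcd : c ≤ d) (hc : c ∈ F) (hd : d ∈ F)
    (h g : ℝ → ℝ) (hg : IntegrableOn g (Icc c d))
    (hder : ∀ t ∈ F ∩ Icc c d, HasDerivWithinAt h (g t) (F ∩ Icc c d) t)
    (hgap : ∀ a ∈ F, ∀ b ∈ F, c ≤ a → a < b → b ≤ d → (∀ s ∈ Ioo a b, s ∉ F) →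
      h b - h a = ∫ y in a..b, g y) :
    h d - h c ≤ ∫ y in c..d, g y := by
  refine le_of_forall_pos_le_add fun ε εpos => ?_
  rcases exists_lt_lowerSemicontinuous_integral_lt g hg εpos with
    ⟨G', f_lt_G', G'cont, G'int, G'lt_top, hG'⟩
  have hII : ∀ a b, c ≤ a → a ≤ b → b ≤ d → IntervalIntegrable (fun u => (G' u).toReal) volume a b := by
    intro a b ha hab hb
    rw [intervalIntegrable_iff_integrableOn_Ioc_of_le hab]
    exact IntegrableOn.mono_set G'int (Ioc_subset_Icc_self.trans (Icc_subset_Icc ha hb))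
  have hIg : ∀ a b, c ≤ a → a ≤ b → b ≤ d → IntervalIntegrable g volume a b := by
    intro a b ha hab hb
    rw [intervalIntegrable_iff_integrableOn_Ioc_of_le hab]
    exact IntegrableOn.mono_set hg (Ioc_subset_Icc_self.trans (Icc_subset_Icc ha hb))
  set K := F ∩ Icc c d with hK
  have hKc : IsClosed K := hF.inter isClosed_Icc
  set s := K ∩ {t | h t - h c ≤ ∫ u in c..t, (G' u).toReal} with hs
  have s_closed : IsClosed s := by
    have : ContinuousOn (fun t => (h t - h c, ∫ u in c..t, (G' u).toReal)) K := by
      refine ContinuousOn.prodMk ?_ ?_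
      · exact ContinuousOn.sub (fun t ht => (hder t ht).continuousWithinAt) continuousOn_const
      · have h2 : ContinuousOn (fun t => ∫ u in c..t, (G' u).toReal) (uIcc c d) := by
          apply intervalIntegral.continuousOn_primitive_interval
          rw [uIcc_of_le hcd]; exact G'int
        rw [uIcc_of_le hcd] at h2
        exact h2.mono inter_subset_right
    exact this.preimage_isClosed_of_isClosed hKc OrderClosedTopology.isClosed_le'
  have s_ne : s.Nonempty := ⟨c, ⟨hc, left_mem_Icc.2 hcd⟩, by simp⟩
  have s_bdd : BddAbove s := ⟨d, fun t ht => ht.1.2.2⟩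
  have hm := s_closed.csSup_mem s_ne s_bdd
  set m := sSup s with hmdef
  have key : ∀ b ∈ K, m < b → h b - h m ≤ (∫ u in m..b, (G' u).toReal) → False := by
    intro b hb hmb hle
    have : b ∈ s := by
      refine ⟨hb, ?_⟩
      have e := intervalIntegral.integral_add_adjacent_intervals
        (hII c m le_rfl hm.1.2.1 hm.1.2.2) (hII m b hm.1.2.1 hmb.le hb.2.2)
      have := hm.2
      simp only [mem_ofPred_eq] at this ⊢
      linarith
    exact absurd (le_csSup s_bdd this) (not_le.2 hmb)
  rcases hm.1.2.2.eq_or_lt with hmd | hmd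
  · have h1 := hm.2
    simp only [mem_ofPred_eq] at h1
    rw [hmd] at h1
    refine h1.trans ?_
    rw [intervalIntegral.integral_of_le hcd, intervalIntegral.integral_of_le hcd,
      ← integral_Icc_eq_integral_Ioc, ← integral_Icc_eq_integral_Ioc]
    exact hG'.le
  exfalso
  set R := F ∩ Icc c d ∩ Ioi m with hR
  have hdR : d ∈ R := ⟨⟨hd, right_mem_Icc.2 hcd⟩, hmd⟩
  by_cases hacc : ∃ᶠ u in 𝓝[>] m, u ∈ K
  · obtain ⟨y, g'_lt_y', y_lt_G'⟩ : ∃ y : ℝ, (g m : EReal) < y ∧ (y : EReal) < G' m :=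
      EReal.lt_iff_exists_real_btwn.1 (f_lt_G' m)
    have I1 : ∀ᶠ u in 𝓝[>] m, (u - m) * y ≤ ∫ w in m..u, (G' w).toReal := by
      have B : ∀ᶠ u in 𝓝 m, (y : EReal) < G' u := G'cont.lowerSemicontinuousAt _ _ y_lt_G'
      rcases mem_nhds_iff_exists_Ioo_subset.1 B with ⟨m', M, ⟨hm', hM⟩, H⟩
      have : Ioo m (min M d) ∈ 𝓝[>] m := Ioo_mem_nhdsGT (lt_min hM hmd)
      filter_upwards [this] with u hu
      have I : Icc m u ⊆ Icc c d := Icc_subset_Icc hm.1.2.1 (hu.2.le.trans (min_le_right _ _))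
      calc
        (u - m) * y = ∫ _ in Icc m u, y := by
          simp only [MeasureTheory.integral_const, MeasurableSet.univ, measureReal_restrict_apply,
            univ_inter, hu.left.le, Real.volume_real_Icc_of_le, smul_eq_mul]
        _ ≤ ∫ w in m..u, (G' w).toReal := by
          rw [intervalIntegral.integral_of_le hu.1.le, ← integral_Icc_eq_integral_Ioc]
          apply setIntegral_mono_ae_restrict
          · simp
          · exact IntegrableOn.mono_set G'int I
          · have C1 : ∀ᵐ x : ℝ ∂volume.restrict (Icc m u), G' x < ⊤ :=
              ae_mono (Measure.restrict_mono I le_rfl) G'lt_top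
            have C2 : ∀ᵐ x : ℝ ∂volume.restrict (Icc m u), x ∈ Icc m u :=
              ae_restrict_mem measurableSet_Icc
            filter_upwards [C1, C2] with x G'x hx
            apply EReal.coe_le_coe_iff.1
            have : x ∈ Ioo m' M := by
              simp only [hm'.trans_le hx.left,
                (hx.right.trans_lt hu.right).trans_le (min_le_left M d), mem_Ioo, and_self_iff]
            refine (H this).out.le.trans_eq ?_
            exact (EReal.coe_toReal G'x.ne (f_lt_G' x).ne_bot).symm
    have I2 : ∀ᶠ u in 𝓝[>] m, u ∈ K → h u - h m ≤ (u - m) * y := by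
      have g'_lt_y : g m < y := EReal.coe_lt_coe_iff.1 g'_lt_y'
      have hd1 : HasDerivWithinAt h (g m) (K ∩ Ioi m) m := (hder m hm.1).mono inter_subset_left
      have h3 := hd1.limsup_slope_le' (by simp) g'_lt_y
      rw [inter_comm, nhdsWithin_inter', eventually_inf_principal] at h3
      filter_upwards [h3, self_mem_nhdsWithin] with u hu t_lt_u huK
      have := mul_le_mul_of_nonneg_left (hu huK).le (sub_pos.2 t_lt_u.out).le
      rwa [← smul_eq_mul, sub_smul_slope] at this
    obtain ⟨u, huK, h1, h2, h3⟩ := (hacc.and_eventually (I1.and (I2.and self_mem_nhdsWithin))).exists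
    exact key u huK h3 ((h2 huK).trans h1)
  · rw [not_frequently] at hacc
    obtain ⟨e, he, hsub⟩ := (mem_nhdsGT_iff_exists_Ioo_subset).1 hacc
    have he' : m < e := he
    have hRc : IsClosed (K ∩ Icc e d) := hKc.inter isClosed_Icc
    have hdne : d ∈ K ∩ Icc e d := by
      refine ⟨hdR.1, ?_, le_rfl⟩
      by_contra hlt
      exact hsub ⟨hmd, not_le.1 hlt⟩ hdR.1
    have hbm := hRc.csInf_mem ⟨d, hdne⟩ ⟨e, fun t ht => ht.2.1⟩
    set b := sInf (K ∩ Icc e d)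
    have hmb : m < b := he'.trans_le hbm.2.1
    have hg1 := hgap m hm.1.1 b hbm.1.1 hm.1.2.1 hmb hbm.2.2 (by
      intro t ht htF
      have htK : t ∈ K := ⟨htF, hm.1.2.1.trans ht.1.le, ht.2.le.trans hbm.2.2⟩
      rcases lt_or_ge t e with h1 | h1
      · exact hsub ⟨ht.1, h1⟩ htK
      · have : b ≤ t := csInf_le ⟨e, fun t ht => ht.2.1⟩ ⟨htK, h1, htK.2.2⟩
        exact absurd ht.2 (not_lt.2 this))
    refine key b hbm.1 hmb ?_
    rw [hg1]
    apply intervalIntegral.integral_mono_ae_restrict hmb.le (hIg m b hm.1.2.1 hmb.le hbm.2.2)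
      (hII m b hm.1.2.1 hmb.le hbm.2.2)
    have C1 : ∀ᵐ x : ℝ ∂volume.restrict (Icc m b), G' x < ⊤ :=
      ae_mono (Measure.restrict_mono (Icc_subset_Icc hm.1.2.1 hbm.2.2) le_rfl) G'lt_top
    filter_upwards [C1] with x G'x
    apply EReal.coe_le_coe_iff.1
    rw [EReal.coe_toReal G'x.ne (f_lt_G' x).ne_bot]
    exact (f_lt_G' x).le

lemma ftc_closed (F : Set ℝ) (hF : IsClosed F) {c d : ℝ} (hcd : c ≤ d) (hc : c ∈ F) (hd : d ∈ F)
    (h g : ℝ → ℝ) (hg : IntegrableOn g (Icc c d))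
    (hder : ∀ t ∈ F ∩ Icc c d, HasDerivWithinAt h (g t) (F ∩ Icc c d) t)
    (hgap : ∀ a ∈ F, ∀ b ∈ F, c ≤ a → a < b → b ≤ d → (∀ s ∈ Ioo a b, s ∉ F) →
      h b - h a = ∫ y in a..b, g y) :
    h d - h c = ∫ y in c..d, g y := by
  apply le_antisymm (ftc_closed_le F hF hcd hc hd h g hg hder hgap)
  have := ftc_closed_le F hF hcd hc hd (fun t => - h t) (fun t => - g t) hg.neg
    (fun t ht => (hder t ht).neg) (by
      intro a ha b hb h1 h2 h3 h4
      rw [intervalIntegral.integral_neg, ← hgap a ha b hb h1 h2 h3 h4]; ring)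
  rw [intervalIntegral.integral_neg] at this
  linarith
end WBGK

namespace WBGK
open Set Filter Topology
open scoped ENNReal NNReal

/-- Free transport (shear) map in the phase space, coordinates `z = (v, x)`. -/
def sh (t : ℝ) (z : ℝ × ℝ) : ℝ × ℝ := (z.1, z.2 + t * z.1)

lemma sh_cont : Continuous (fun p : ℝ × (ℝ × ℝ) => sh p.1 p.2) := by
  unfold sh; fun_prop

lemma sh_meas (t : ℝ) : Measurable (sh t) := by
  unfold sh; fun_prop

lemma sh_mp (t : ℝ) : MeasurePreserving (sh t) volume volume := by
  have := MeasurePreserving.skew_product (μa := (volume : Measure ℝ)) (μb := (volume : Measure ℝ))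
    (μc := (volume : Measure ℝ)) (μd := (volume : Measure ℝ)) (f := id)
    (MeasurePreserving.id _) (g := fun v x => x + t * v) (by unfold Function.uncurry; fun_prop)
    (Eventually.of_forall fun v => (measurePreserving_add_right volume (t * v)).map_eq)
  exact this

/-- The velocity weight `1 + v²`. -/
noncomputable def wt (z : ℝ × ℝ) : ℝ≥0∞ := ENNReal.ofReal (1 + z.1 ^ 2)

lemma wt_meas : Measurable wt := by unfold wt; fun_prop

lemma wt_ne_zero (z : ℝ × ℝ) : wt z ≠ 0 := by
  unfold wt; simp only [ne_eq, ENNReal.ofReal_eq_zero, not_le]; positivity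

/-- Weighted `L¹` norm. -/
noncomputable def NN (g : ℝ × ℝ → ℝ) : ℝ≥0∞ := ∫⁻ z, wt z * ‖g z‖ₑ

lemma NN_sh (t : ℝ) (g : ℝ × ℝ → ℝ) (hg : Measurable g) :
    ∫⁻ z, wt z * ‖g (sh t z)‖ₑ = NN g :=
  (sh_mp t).lintegral_comp (f := fun z => wt z * ‖g z‖ₑ) (wt_meas.mul hg.enorm)

/-- The mild formulation between the times `c` and `d`. -/
def PP (f G : ℝ → ℝ × ℝ → ℝ) (c d : ℝ) : Prop :=
  ∀ᵐ z : ℝ × ℝ, f d (sh d z) - f c (sh c z) = ∫ r in c..d, G r (sh r z)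

/-- Mild formulation and boundedness. -/
def QQ (f G : ℝ → ℝ × ℝ → ℝ) (c d : ℝ) : Prop :=
  (∃ M : ℝ≥0∞, M < ⊤ ∧ ∀ r ∈ uIcc c d, NN (f r) ≤ M) ∧ PP f G c d

/-- Second difference condition. -/
def SD (g : ℝ × ℝ → ℝ) (n : ℕ) : Prop :=
  ∀ v x a b : ℝ, a ≠ 0 → b ≠ 0 →
    |(g (v, x + a) - g (v, x)) / a - (g (v, x + b) - g (v, x)) / b| ≤ n * (|a| + |b|)

structure Dyn (f G : ℝ → ℝ × ℝ → ℝ) (C : ℝ≥0) : Prop where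
  fm : Measurable (Function.uncurry f)
  Gm : Measurable (Function.uncurry G)
  fc : ∀ t, Continuous (f t)
  ft : ∀ z, Continuous (fun t => f t z)
  fin : ∀ t, NN (f t) < ⊤
  bd : ∀ t, NN (G t) ≤ C * NN (f t)
  der : ∀ t z, ∃ p q, HasDerivAt (fun s => f s z) p t ∧
    HasDerivAt (fun y => f t (z.1, y)) q z.2 ∧ G t z = p + z.1 * q
  sd : ∀ t, ∃ n : ℕ, SD (f t) n

variable {f G : ℝ → ℝ × ℝ → ℝ} {C : ℝ≥0}

lemma Dyn.Gshm (H : Dyn f G C) : Measurable (fun p : ℝ × (ℝ × ℝ) => G p.1 (sh p.1 p.2)) :=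
  H.Gm.comp (measurable_fst.prodMk sh_cont.measurable)

lemma Dyn.lintG (H : Dyn f G C) {c d : ℝ} {M : ℝ≥0∞} (hM : ∀ r ∈ uIcc c d, NN (f r) ≤ M) :
    ∫⁻ z : ℝ × ℝ, wt z * ∫⁻ r in uIoc c d, ‖G r (sh r z)‖ₑ ≤ C * M * ENNReal.ofReal |d - c| := by
  have hm : Measurable (fun p : (ℝ × ℝ) × ℝ => ‖G p.2 (sh p.2 p.1)‖ₑ) :=
    (H.Gshm.comp measurable_swap).enorm
  calc ∫⁻ z : ℝ × ℝ, wt z * ∫⁻ r in uIoc c d, ‖G r (sh r z)‖ₑ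
      = ∫⁻ z : ℝ × ℝ, ∫⁻ r in uIoc c d, wt z * ‖G r (sh r z)‖ₑ := by
        refine lintegral_congr fun z => ?_
        rw [lintegral_const_mul]
        exact hm.comp measurable_prodMk_left
    _ = ∫⁻ r in uIoc c d, ∫⁻ z : ℝ × ℝ, wt z * ‖G r (sh r z)‖ₑ := by
        rw [lintegral_lintegral_swap]
        exact ((wt_meas.comp measurable_fst).mul hm).aemeasurable
    _ ≤ ∫⁻ r in uIoc c d, C * M := by
        refine setLIntegral_mono measurable_const fun r hr => ?_
        rw [NN_sh r (G r) (H.Gm.comp measurable_prodMk_left)]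
        refine (H.bd r).trans ?_
        gcongr
        exact hM r (uIoc_subset_uIcc hr)
    _ = C * M * ENNReal.ofReal |d - c| := by
        rw [setLIntegral_const, Real.volume_uIoc]

lemma Dyn.intG (H : Dyn f G C) {c d : ℝ} {M : ℝ≥0∞} (hMt : M < ⊤)
    (hM : ∀ r ∈ uIcc c d, NN (f r) ≤ M) :
    ∀ᵐ z : ℝ × ℝ, IntervalIntegrable (fun r => G r (sh r z)) volume c d := by
  have hm : Measurable (fun p : (ℝ × ℝ) × ℝ => ‖G p.2 (sh p.2 p.1)‖ₑ) :=
    (H.Gshm.comp measurable_swap).enorm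
  have h1 := H.lintG hM
  have h2 : ∫⁻ z : ℝ × ℝ, wt z * ∫⁻ r in uIoc c d, ‖G r (sh r z)‖ₑ ≠ ⊤ := by
    refine ne_top_of_le_ne_top ?_ h1
    exact ENNReal.mul_ne_top (ENNReal.mul_ne_top ENNReal.coe_ne_top hMt.ne) ENNReal.ofReal_ne_top
  have h3 := ae_lt_top (wt_meas.mul (Measurable.lintegral_prod_right' hm)) h2
  filter_upwards [h3] with z hz
  rw [intervalIntegrable_iff]
  refine ⟨(H.Gshm.comp measurable_prodMk_right).aestronglyMeasurable, ?_⟩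
  rw [hasFiniteIntegral_iff_enorm]
  by_contra hcon
  rw [not_lt, top_le_iff] at hcon
  simp only [Pi.mul_apply] at hz
  rw [hcon, ENNReal.mul_top (wt_ne_zero z)] at hz
  exact lt_irrefl _ hz

lemma PP.symm {c d : ℝ} (h : PP f G c d) : PP f G d c := by
  filter_upwards [h] with z hz
  rw [intervalIntegral.integral_symm, ← hz]; ring

lemma QQ.symm {c d : ℝ} (h : QQ f G c d) : QQ f G d c := by
  refine ⟨?_, h.2.symm⟩
  rw [uIcc_comm]; exact h.1

lemma Dyn.qq_refl (H : Dyn f G C) (c : ℝ) : QQ f G c c := by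
  refine ⟨⟨NN (f c), H.fin c, by simp⟩, ?_⟩
  exact Eventually.of_forall fun z => by simp

lemma Dyn.qq_trans (H : Dyn f G C) {a b c : ℝ} (h1 : QQ f G a b) (h2 : QQ f G b c) :
    QQ f G a c := by
  obtain ⟨⟨M1, hM1, hb1⟩, p1⟩ := h1
  obtain ⟨⟨M2, hM2, hb2⟩, p2⟩ := h2
  refine ⟨⟨max M1 M2, max_lt hM1 hM2, ?_⟩, ?_⟩
  · intro r hr
    rcases uIcc_subset_uIcc_union_uIcc (b := b) hr with h | h
    · exact (hb1 r h).trans (le_max_left _ _)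
    · exact (hb2 r h).trans (le_max_right _ _)
  · filter_upwards [p1, p2, H.intG hM1 hb1, H.intG hM2 hb2] with z z1 z2 i1 i2
    rw [← intervalIntegral.integral_add_adjacent_intervals i1 i2, ← z1, ← z2]; ring

lemma Dyn.grow (H : Dyn f G C) {c d : ℝ} {M : ℝ≥0∞} (hM : ∀ r ∈ uIcc c d, NN (f r) ≤ M)
    (hP : PP f G c d) : NN (f d) ≤ NN (f c) + C * M * ENNReal.ofReal |d - c| := by
  rw [← NN_sh d (f d) (H.fc d).measurable, ← NN_sh c (f c) (H.fc c).measurable]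
  refine le_trans ?_ (add_le_add le_rfl (H.lintG hM))
  have hmm : Measurable (fun z : ℝ × ℝ => wt z * ‖f c (sh c z)‖ₑ) :=
    wt_meas.mul ((H.fc c).measurable.comp (sh_meas c)).enorm
  rw [← lintegral_add_left hmm]
  refine lintegral_mono_ae ?_
  filter_upwards [hP] with z hz
  rw [← mul_add]
  gcongr
  have : f d (sh d z) = f c (sh c z) + ∫ r in c..d, G r (sh r z) := by rw [← hz]; ring
  rw [this]
  refine (enorm_add_le _ _).trans ?_
  gcongr
  rw [← enorm_norm, intervalIntegral.norm_intervalIntegral_eq, enorm_norm]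
  exact enorm_integral_le_lintegral_enorm _

lemma Dyn.double (H : Dyn f G C) {δ : ℝ} (hδ : C * ENNReal.ofReal δ ≤ 1 / 2) {c d : ℝ}
    (hcd : |d - c| ≤ δ) (hQ : ∀ s ∈ uIcc c d, QQ f G s d) {s t : ℝ} (hs : s ∈ uIcc c d)
    (ht : t ∈ uIcc c d) : NN (f s) ≤ 2 * NN (f t) := by
  obtain ⟨⟨M0, hM0, hb0⟩, -⟩ := hQ c left_mem_uIcc
  set M := ⨆ r ∈ uIcc c d, NN (f r) with hMdef
  have hMle : ∀ r ∈ uIcc c d, NN (f r) ≤ M := fun r hr => le_iSup₂_of_le r hr le_rfl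
  have hMt : M < ⊤ := lt_of_le_of_lt (iSup₂_le hb0) hM0
  have key : M ≤ NN (f t) + M / 2 := by
    refine iSup₂_le fun r hr => ?_
    have hq := H.qq_trans (hQ t ht) (hQ r hr).symm
    have hsub : uIcc t r ⊆ uIcc c d := uIcc_subset_uIcc ht hr
    refine (H.grow (fun r hr => hMle r (hsub hr)) hq.2).trans ?_
    gcongr
    calc C * M * ENNReal.ofReal |r - t| ≤ C * M * ENNReal.ofReal δ := by
          gcongr
          exact (abs_sub_le_of_uIcc_subset_uIcc hsub).trans hcd
      _ = C * ENNReal.ofReal δ * M := by ring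
      _ ≤ 1 / 2 * M := by gcongr
      _ = M / 2 := by rw [one_div, ENNReal.div_eq_inv_mul]
  have h2 : M / 2 ≤ NN (f t) := by
    have h3 : M / 2 + M / 2 ≤ NN (f t) + M / 2 := by rwa [ENNReal.add_halves]
    exact (ENNReal.add_le_add_iff_right (ENNReal.div_ne_top hMt.ne (by norm_num))).1 h3
  refine (hMle s hs).trans ?_
  rw [ENNReal.div_le_iff (by norm_num) (by norm_num)] at h2
  rwa [mul_comm]

end WBGK

namespace WBGK
open Set Filter Topology
open scoped ENNReal NNReal
variable {f G : ℝ → ℝ × ℝ → ℝ} {C : ℝ≥0}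

/-- A positive continuous integrable function. -/
noncomputable def chi (z : ℝ × ℝ) : ℝ≥0∞ :=
  ENNReal.ofReal (Real.exp (-1 * z.1 ^ 2) * Real.exp (-1 * z.2 ^ 2))

lemma chi_cont : Continuous chi := by
  unfold chi; exact ENNReal.continuous_ofReal.comp (by fun_prop)

lemma chi_ne_zero (z : ℝ × ℝ) : chi z ≠ 0 := by
  unfold chi; simp only [ne_eq, ENNReal.ofReal_eq_zero, not_le]; positivity

lemma chi_fin : ∫⁻ z, chi z ≠ ⊤ := by
  have h := (integrable_exp_neg_mul_sq (b := 1) one_pos).mul_prod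
    (integrable_exp_neg_mul_sq (b := 1) one_pos)
  have h2 := h.2
  rw [hasFiniteIntegral_iff_ofReal (Eventually.of_forall fun z => by positivity)] at h2
  exact h2.ne

lemma Dyn.limit (H : Dyn f G C) {a d : ℝ} {M : ℝ≥0∞} (hMt : M < ⊤)
    (hM : ∀ r ∈ uIcc a d, NN (f r) ≤ M) (s : ℕ → ℝ) (hs : ∀ k, s k ∈ uIcc a d)
    (hlim : Tendsto s atTop (𝓝 a)) (hP : ∀ k, PP f G (s k) d) : PP f G a d := by
  set φ : ℕ → ℝ × ℝ → ℝ≥0∞ := fun k z => min 1 ‖f (s k) z - f a z‖ₑ * chi z with hφ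
  have hφm : ∀ k, Measurable (φ k) := fun k =>
    (measurable_const.min ((H.fc (s k)).measurable.sub (H.fc a).measurable).enorm).mul
      chi_cont.measurable
  have h0 : Tendsto (fun k => ∫⁻ z, φ k z) atTop (𝓝 (∫⁻ z : ℝ × ℝ, 0)) := by
    refine tendsto_lintegral_of_dominated_convergence chi hφm ?_ chi_fin ?_
    · intro k
      refine Eventually.of_forall fun z => ?_
      calc φ k z ≤ 1 * chi z := by
            simp only [hφ]; gcongr; exact min_le_left _ _
        _ = chi z := one_mul _
    · refine Eventually.of_forall fun z => ?_
      have h1 : Tendsto (fun k => f (s k) z - f a z) atTop (𝓝 (f a z - f a z)) :=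
        (((H.ft z).tendsto a).comp hlim).sub tendsto_const_nhds
      rw [sub_self] at h1
      have h2 : Tendsto (fun k => min 1 ‖f (s k) z - f a z‖ₑ) atTop (𝓝 (min 1 ‖(0 : ℝ)‖ₑ)) :=
        tendsto_const_nhds.min h1.enorm
      rw [enorm_zero, min_eq_right zero_le_one] at h2
      have := ENNReal.Tendsto.mul_const (b := chi z) h2 (Or.inr ENNReal.ofReal_ne_top)
      rwa [zero_mul] at this
  simp only [lintegral_zero] at h0
  have h1 : ∀ k, ∫⁻ z, φ k (sh (s k) z) = ∫⁻ z, φ k z := fun k =>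
    (sh_mp (s k)).lintegral_comp (hφm k)
  have h2 : ∫⁻ z, liminf (fun k => φ k (sh (s k) z)) atTop = 0 := by
    have := lintegral_liminf_le (μ := (volume : Measure (ℝ × ℝ))) (u := atTop)
      (f := fun k z => φ k (sh (s k) z)) (fun k => (hφm k).comp (sh_meas _))
    simp only [h1] at this
    rw [h0.liminf_eq] at this
    exact le_antisymm this zero_le
  have h3 := (lintegral_eq_zero_iff
    (Measurable.liminf fun k => (hφm k).comp (sh_meas (s k)))).1 h2
  filter_upwards [h3, H.intG hMt hM, ae_all_iff.2 hP] with z z3 zi zP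
  have hcontI : ContinuousOn (fun x => ∫ r in d..x, G r (sh r z)) (uIcc a d) :=
    intervalIntegral.continuousOn_primitive_interval' zi right_mem_uIcc
  have hlimw : Tendsto s atTop (𝓝[uIcc a d] a) :=
    tendsto_nhdsWithin_iff.2 ⟨hlim, Eventually.of_forall hs⟩
  have t1 : Tendsto (fun k => f (s k) (sh (s k) z)) atTop
      (𝓝 (f d (sh d z) + ∫ r in d..a, G r (sh r z))) := by
    have e : ∀ k, f (s k) (sh (s k) z) = f d (sh d z) + ∫ r in d..(s k), G r (sh r z) := by
      intro k
      rw [intervalIntegral.integral_symm, ← zP k]; ring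
    simp only [e]
    exact tendsto_const_nhds.add ((hcontI a left_mem_uIcc).tendsto.comp hlimw)
  have t2 : Tendsto (fun k => sh (s k) z) atTop (𝓝 (sh a z)) :=
    ((sh_cont.comp (Continuous.prodMk_left z)).tendsto a).comp hlim
  have t3 : Tendsto (fun k => f a (sh (s k) z)) atTop (𝓝 (f a (sh a z))) :=
    ((H.fc a).tendsto _).comp t2
  have t4 : Tendsto (fun k => φ k (sh (s k) z)) atTop
      (𝓝 (min 1 ‖f d (sh d z) + (∫ r in d..a, G r (sh r z)) - f a (sh a z)‖ₑ * chi (sh a z))) := by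
    refine ENNReal.Tendsto.mul (tendsto_const_nhds.min (t1.sub t3).enorm)
      (Or.inr ENNReal.ofReal_ne_top) ((chi_cont.tendsto _).comp t2) (Or.inr ?_)
    exact ne_top_of_le_ne_top ENNReal.one_ne_top (min_le_left _ _)
  have z4 : min 1 ‖f d (sh d z) + (∫ r in d..a, G r (sh r z)) - f a (sh a z)‖ₑ * chi (sh a z) = 0 := by
    rw [← t4.liminf_eq]; exact z3
  rcases mul_eq_zero.1 z4 with h | h
  · have h5 : ‖f d (sh d z) + (∫ r in d..a, G r (sh r z)) - f a (sh a z)‖ₑ = 0 := by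
      rcases min_choice 1 ‖f d (sh d z) + (∫ r in d..a, G r (sh r z)) - f a (sh a z)‖ₑ with h6 | h6
      · rw [h6] at h; exact absurd h one_ne_zero
      · rw [← h6, h]
    rw [enorm_eq_zero, intervalIntegral.integral_symm] at h5
    linarith
  · exact absurd h (chi_ne_zero _)

lemma Dyn.limitQ (H : Dyn f G C) {δ : ℝ} (hδ : C * ENNReal.ofReal δ ≤ 1 / 2) {a d : ℝ}
    (had : |d - a| ≤ δ) (hQ : ∀ s ∈ uIcc a d, s ≠ a → QQ f G s d) :
    QQ f G a d ∧ NN (f d) ≤ 2 * NN (f a) := by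
  have main : QQ f G a d := by
    rcases eq_or_ne a d with rfl | hne
    · exact H.qq_refl a
    have hnot : ∀ s ∈ uIcc a d, s ≠ a → a ∉ uIcc s d := by
      intro s hs hsa ha
      rw [mem_uIcc] at hs ha
      apply hsa
      rcases hs with hs | hs <;> rcases ha with ha | ha <;>
        first
        | exact le_antisymm (by linarith) (by linarith)
        | (exfalso; apply hne; apply le_antisymm <;> linarith)
    have hb : ∀ r ∈ uIcc a d, NN (f r) ≤ max (2 * NN (f d)) (NN (f a)) := by
      intro s hs
      rcases eq_or_ne s a with rfl | hsa
      · exact le_max_right _ _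
      · refine le_trans ?_ (le_max_left _ _)
        have hsub : uIcc s d ⊆ uIcc a d := uIcc_subset_uIcc hs right_mem_uIcc
        refine H.double hδ (c := s) (d := d) ((abs_sub_le_of_uIcc_subset_uIcc hsub).trans had) ?_
          left_mem_uIcc right_mem_uIcc
        intro r hr
        refine hQ r (hsub hr) ?_
        rintro rfl
        exact hnot s hs hsa hr
    have hMt : max (2 * NN (f d)) (NN (f a)) < ⊤ :=
      max_lt (ENNReal.mul_lt_top (by norm_num) (H.fin d)) (H.fin a)
    refine ⟨⟨_, hMt, hb⟩, ?_⟩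
    set s : ℕ → ℝ := fun k => a + (1 / ((k : ℝ) + 1)) * (d - a) with hsdef
    have hu : ∀ k : ℕ, 0 < 1 / ((k : ℝ) + 1) ∧ 1 / ((k : ℝ) + 1) ≤ 1 := by
      intro k
      refine ⟨by positivity, ?_⟩
      rw [div_le_one (by positivity)]
      have : (0 : ℝ) ≤ k := Nat.cast_nonneg k
      linarith
    have hs : ∀ k, s k ∈ uIcc a d := by
      intro k
      obtain ⟨h1, h2⟩ := hu k
      rw [mem_uIcc]
      rcases le_total a d with h | h
      · left; constructor
        · simp only [hsdef]; nlinarith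
        · simp only [hsdef]; nlinarith
      · right; constructor
        · simp only [hsdef]; nlinarith
        · simp only [hsdef]; nlinarith
    refine H.limit hMt hb s hs ?_ ?_
    · have h1 : Tendsto (fun k : ℕ => a + (1 / ((k : ℝ) + 1)) * (d - a)) atTop
          (𝓝 (a + 0 * (d - a))) :=
        tendsto_const_nhds.add (tendsto_one_div_add_atTop_nhds_zero_nat.mul_const _)
      rw [zero_mul, add_zero] at h1
      exact h1
    · intro k
      refine (hQ (s k) (hs k) ?_).2
      intro h
      have h1 : (1 / ((k : ℝ) + 1)) * (d - a) = 0 := by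
        simp only [hsdef] at h; linarith
      rcases mul_eq_zero.1 h1 with h2 | h2
      · exact (hu k).1.ne' h2
      · exact hne (sub_eq_zero.1 h2).symm
  refine ⟨main, H.double hδ had (fun s hs => ?_) right_mem_uIcc left_mem_uIcc⟩
  rcases eq_or_ne s a with rfl | h
  · exact main
  · exact hQ s hs h

/-- Sets of times with uniform bounds. -/
def Sn (f : ℝ → ℝ × ℝ → ℝ) (n : ℕ) : Set ℝ := {t | NN (f t) ≤ n ∧ SD (f t) n}

lemma Dyn.Sn_closed (H : Dyn f G C) (n : ℕ) : IsClosed (Sn f n) := by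
  have h1 : IsClosed {t | NN (f t) ≤ n} := by
    apply IsSeqClosed.isClosed
    intro s t hs hlim
    have := lintegral_liminf_le (μ := (volume : Measure (ℝ × ℝ))) (u := atTop)
      (f := fun k z => wt z * ‖f (s k) z‖ₑ) (fun k => wt_meas.mul (H.fc (s k)).measurable.enorm)
    have e : ∀ z, liminf (fun k => wt z * ‖f (s k) z‖ₑ) atTop = wt z * ‖f t z‖ₑ := by
      intro z
      refine Tendsto.liminf_eq ?_
      exact ENNReal.Tendsto.const_mul (((H.ft z).tendsto t).comp hlim).enorm
        (Or.inr ENNReal.ofReal_ne_top)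
    simp only [e] at this
    refine le_trans this ?_
    refine (liminf_le_liminf (v := fun _ => (n : ℝ≥0∞)) (Eventually.of_forall hs)).trans ?_
    simp
  have h2 : IsClosed {t | SD (f t) n} := by
    simp only [SD, ofPred_forall]
    refine isClosed_iInter fun v => isClosed_iInter fun x => isClosed_iInter fun a =>
      isClosed_iInter fun b => isClosed_iInter fun _ => isClosed_iInter fun _ => ?_
    refine isClosed_le ?_ continuous_const
    exact ((((H.ft _).sub (H.ft _)).div_const _).sub (((H.ft _).sub (H.ft _)).div_const _)).abs
  exact h1.inter h2

lemma SD.mono {g : ℝ × ℝ → ℝ} {n m : ℕ} (h : SD g n) (hnm : n ≤ m) : SD g m := by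
  intro v x a b ha hb
  refine (h v x a b ha hb).trans ?_
  gcongr

lemma Dyn.Sn_cover (H : Dyn f G C) (t : ℝ) : ∃ n, t ∈ Sn f n := by
  obtain ⟨n, hn⟩ := H.sd t
  obtain ⟨m, hm⟩ := ENNReal.exists_nat_gt (H.fin t).ne
  refine ⟨max n m, hm.le.trans ?_, hn.mono (le_max_left _ _)⟩
  exact_mod_cast le_max_right n m

lemma Dyn.rel_deriv (H : Dyn f G C) {n : ℕ} {K : Set ℝ} (hK : K ⊆ Sn f n) {t : ℝ}
    (z : ℝ × ℝ) :
    HasDerivWithinAt (fun s => f s (sh s z)) (G t (sh t z)) K t := by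
  obtain ⟨p, q, hp, hq, hG⟩ := H.der t (sh t z)
  rw [hG]
  set v := z.1 with hv
  set y := (sh t z).2 with hy
  have hv1 : (sh t z).1 = v := rfl
  rw [hv1] at hq ⊢
  have hsplit : (fun s => f s (sh s z)) =
      fun s => f s (sh t z) + (f s (v, y + (s - t) * v) - f s (v, y)) := by
    funext s
    have e1 : sh s z = (v, y + (s - t) * v) := by
      simp only [sh, hy, hv, Prod.mk.injEq, true_and]; ring
    have e2 : sh t z = (v, y) := rfl
    rw [e1, e2]; ring
  rw [hsplit]
  refine hp.hasDerivWithinAt.add ?_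
  rcases eq_or_ne v 0 with hv0 | hv0
  · simp only [hv0, mul_zero, add_zero, sub_self, zero_mul]
    exact hasDerivWithinAt_const _ _ _
  rw [hasDerivWithinAt_iff_isLittleO, Asymptotics.isLittleO_iff]
  intro ε hε
  set η := ε / (4 * |v|) with hη
  have hvp : 0 < |v| := abs_pos.2 hv0
  have hηp : 0 < η := by positivity
  -- choose `b`
  obtain ⟨b, hb0, hb1, hb2⟩ : ∃ b : ℝ, b ≠ 0 ∧ |(f t (v, y + b) - f t (v, y)) / b - q| ≤ η ∧
      n * |b| ≤ η := by
    have s1 := hq.tendsto_slope_zero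
    have e1 : ∀ᶠ b in 𝓝[≠] (0 : ℝ), |(f t (v, y + b) - f t (v, y)) / b - q| ≤ η := by
      filter_upwards [(Metric.tendsto_nhds.1 s1) η hηp] with b hb
      rw [Real.dist_eq, smul_eq_mul, ← div_eq_inv_mul] at hb
      exact hb.le
    have e2 : ∀ᶠ b in 𝓝[≠] (0 : ℝ), n * |b| ≤ η := by
      have : Tendsto (fun b : ℝ => n * |b|) (𝓝 0) (𝓝 (n * |(0 : ℝ)|)) :=
        (continuous_const.mul continuous_abs).tendsto 0
      simp only [abs_zero, mul_zero] at this
      exact (this.mono_left nhdsWithin_le_nhds).eventually_le_const hηp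
    obtain ⟨b, h1, h2, h3⟩ := (e1.and (e2.and self_mem_nhdsWithin)).exists
    exact ⟨b, h3, h1, h2⟩
  have c1 : ∀ᶠ s in 𝓝[K] t, |(f s (v, y + b) - f s (v, y)) / b
      - (f t (v, y + b) - f t (v, y)) / b| ≤ η := by
    have : Tendsto (fun s => (f s (v, y + b) - f s (v, y)) / b) (𝓝 t)
        (𝓝 ((f t (v, y + b) - f t (v, y)) / b)) :=
      ((((H.ft _).sub (H.ft _)).div_const _).tendsto t)
    filter_upwards [(Metric.tendsto_nhds.1 (this.mono_left nhdsWithin_le_nhds)) η hηp] with s hs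
    rw [Real.dist_eq] at hs
    exact hs.le
  have c2 : ∀ᶠ s in 𝓝[K] t, n * |(s - t) * v| ≤ η := by
    have : Tendsto (fun s : ℝ => n * |(s - t) * v|) (𝓝 t) (𝓝 (n * |(t - t) * v|)) := by
      apply Continuous.tendsto (f := fun s : ℝ => n * |(s - t) * v|); fun_prop
    simp only [sub_self, zero_mul, abs_zero, mul_zero] at this
    exact (this.mono_left nhdsWithin_le_nhds).eventually_le_const hηp
  filter_upwards [c1, c2, self_mem_nhdsWithin] with s h1 h2 hsK
  simp only [sub_self, zero_mul, add_zero, sub_zero, smul_eq_mul, Real.norm_eq_abs]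
  rcases eq_or_ne s t with rfl | hst
  · simp
  set a := (s - t) * v with ha
  have ha0 : a ≠ 0 := mul_ne_zero (sub_ne_zero.2 hst) hv0
  have h3 := (hK hsK).2 v y a b ha0 hb0
  have h4 : |(f s (v, y + a) - f s (v, y)) / a - q| ≤ 4 * η := by
    rw [abs_le] at *
    constructor <;> linarith [h3.1, h3.2, hb1.1, hb1.2, h1.1, h1.2]
  have h5 : f s (v, y + a) - f s (v, y) - (s - t) * (v * q) =
      ((f s (v, y + a) - f s (v, y)) / a - q) * a := by
    have e := div_mul_cancel₀ (f s (v, y + a) - f s (v, y)) ha0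
    linear_combination -e + q * ha
  rw [h5, abs_mul]
  calc |(f s (v, y + a) - f s (v, y)) / a - q| * |a| ≤ 4 * η * |a| := by gcongr
    _ = ε * |s - t| := by rw [ha, abs_mul, hη]; field_simp

end WBGK

namespace WBGK
open Set Filter Topology
open scoped ENNReal NNReal
variable {f G : ℝ → ℝ × ℝ → ℝ} {C : ℝ≥0}

/-- Times around which the mild formulation holds. -/
def AA (f G : ℝ → ℝ × ℝ → ℝ) : Set ℝ :=
  {t | ∃ ε > 0, ∀ c ∈ Metric.ball t ε, ∀ d ∈ Metric.ball t ε, QQ f G c d}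

lemma AA_open : IsOpen (AA f G) := by
  rw [Metric.isOpen_iff]
  rintro t ⟨ε, hε, h⟩
  refine ⟨ε / 2, half_pos hε, fun s hs => ⟨ε / 2, half_pos hε, ?_⟩⟩
  have hsub : Metric.ball s (ε / 2) ⊆ Metric.ball t ε := by
    apply Metric.ball_subset_ball'
    have : dist s t < ε / 2 := hs
    linarith
  exact fun c hc d hd => h c (hsub hc) d (hsub hd)

lemma Dyn.qq_of_subset (H : Dyn f G C) {S : Set ℝ} (hS : IsPreconnected S) (hA : S ⊆ AA f G)
    {c d : ℝ} (hc : c ∈ S) (hd : d ∈ S) : QQ f G c d := by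
  refine hS.induction₂ (QQ f G) ?_ (fun x y z _ _ _ h1 h2 => H.qq_trans h1 h2)
    (fun x y _ _ h => h.symm) hc hd
  intro x hx
  obtain ⟨ε, hε, h⟩ := hA hx
  refine mem_nhdsWithin_of_mem_nhds ?_
  filter_upwards [Metric.ball_mem_nhds x hε] with y hy
  exact h x (Metric.mem_ball_self hε) y hy

lemma Dyn.qq_of_gap (H : Dyn f G C) {δ : ℝ} (hδ : C * ENNReal.ofReal δ ≤ 1 / 2) {a d : ℝ}
    (had : |d - a| ≤ δ) (hA : ∀ s ∈ uIcc a d, s ≠ a → s ∈ AA f G) :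
    QQ f G a d ∧ NN (f d) ≤ 2 * NN (f a) := by
  refine H.limitQ hδ had fun s hs hsa => ?_
  refine H.qq_of_subset (S := uIcc s d) isPreconnected_uIcc ?_ left_mem_uIcc right_mem_uIcc
  intro r hr
  refine hA r (uIcc_subset_uIcc hs right_mem_uIcc hr) ?_
  rintro rfl
  rw [mem_uIcc] at hs hr
  apply hsa
  rcases hs with hs | hs <;> rcases hr with ha | ha <;> apply le_antisymm <;> linarith

theorem Dyn.all (H : Dyn f G C) (c d : ℝ) : QQ f G c d := by
  suffices hA : AA f G = univ from
    H.qq_of_subset isPreconnected_univ (by rw [hA]) (mem_univ c) (mem_univ d)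
  by_contra hne
  set F := (AA f G)ᶜ with hFdef
  have hFc : IsClosed F := AA_open.isClosed_compl
  have hFne : F.Nonempty := nonempty_compl.2 hne
  haveI : Nonempty F := hFne.to_subtype
  haveI : CompleteSpace F := hFc.completeSpace_coe
  obtain ⟨n, ⟨⟨t0, ht0F⟩, ht0⟩⟩ := nonempty_interior_of_iUnion_of_closed
    (X := F) (f := fun n => (Subtype.val ⁻¹' (Sn f n) : Set F))
    (fun n => (H.Sn_closed n).preimage continuous_subtype_val)
    (by
      refine eq_univ_of_forall fun t => ?_
      obtain ⟨n, hn⟩ := H.Sn_cover t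
      exact mem_iUnion.2 ⟨n, hn⟩)
  rw [mem_interior_iff_mem_nhds, Metric.mem_nhds_iff] at ht0
  obtain ⟨ε0, hε0, hball⟩ := ht0
  obtain ⟨δ, hδp, hδ⟩ : ∃ δ : ℝ, 0 < δ ∧ C * ENNReal.ofReal δ ≤ 1 / 2 := by
    refine ⟨1 / (2 * ((C : ℝ) + 1)), by positivity, ?_⟩
    rw [← ENNReal.ofReal_coe_nnreal, ← ENNReal.ofReal_mul (by positivity)]
    have : (1 / 2 : ℝ≥0∞) = ENNReal.ofReal (1 / 2) := by
      rw [ENNReal.ofReal_div_of_pos (by norm_num)]; simp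
    rw [this]
    apply ENNReal.ofReal_le_ofReal
    have hC : (0 : ℝ) ≤ C := C.2
    rw [mul_one_div, div_le_div_iff₀ (by positivity) (by norm_num)]
    linarith
  set ε := min ε0 (δ / 2) with hε
  have hεp : 0 < ε := lt_min hε0 (half_pos hδp)
  set I := Metric.ball t0 ε with hI
  have hIcv : ∀ {a b : ℝ}, a ∈ I → b ∈ I → uIcc a b ⊆ I := by
    intro a b ha hb
    have : OrdConnected I := by rw [hI, Real.ball_eq_Ioo]; exact ordConnected_Ioo
    exact this.uIcc_subset ha hb
  have hIδ : ∀ {a b : ℝ}, a ∈ I → b ∈ I → |b - a| ≤ δ := by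
    intro a b ha hb
    rw [← Real.dist_eq]
    have h1 : dist b t0 < ε := hb
    have h2 : dist a t0 < ε := ha
    have h3 : ε ≤ δ / 2 := min_le_right _ _
    have := dist_triangle_right b a t0
    linarith
  have ht0I : t0 ∈ I := Metric.mem_ball_self hεp
  have hFI : ∀ s ∈ F, s ∈ I → s ∈ Sn f n := by
    intro s hs hsI
    have : (⟨s, hs⟩ : F) ∈ Metric.ball (⟨t0, ht0F⟩ : F) ε0 :=
      lt_of_lt_of_le (show dist s t0 < ε from hsI) (min_le_left _ _)
    exact hball this
  -- nearest point of `F`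
  have hnear : ∀ t ∈ I, ∃ a ∈ F, a ∈ I ∧ QQ f G a t ∧ NN (f t) ≤ 2 * n := by
    intro t ht
    have hcpt : IsCompact (F ∩ uIcc t0 t) := isCompact_uIcc.inter_left hFc
    obtain ⟨a, ha, hdist⟩ := hcpt.exists_infDist_eq_dist ⟨t0, ht0F, left_mem_uIcc⟩ t
    have haI : a ∈ I := hIcv ht0I ht ha.2
    have hq := H.qq_of_gap hδ (a := a) (d := t) (hIδ haI ht) (by
      intro s hs hsa
      by_contra hsA
      have hsub : uIcc a t ⊆ uIcc t0 t := uIcc_subset_uIcc ha.2 right_mem_uIcc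
      have h1 := Metric.infDist_le_dist_of_mem (x := t) (show s ∈ F ∩ uIcc t0 t from ⟨hsA, hsub hs⟩)
      rw [hdist, Real.dist_eq, Real.dist_eq] at h1
      apply hsa
      rw [mem_uIcc] at hs
      rcases hs with hs | hs
      · rw [abs_of_nonneg (by linarith), abs_of_nonneg (by linarith)] at h1
        linarith
      · rw [abs_of_nonpos (by linarith), abs_of_nonpos (by linarith)] at h1
        linarith)
    refine ⟨a, ha.1, haI, hq.1, hq.2.trans ?_⟩
    gcongr
    exact (hFI a ha.1 haI).1
  have hMt : (2 * n : ℝ≥0∞) < ⊤ := ENNReal.mul_lt_top (by norm_num) (by simp)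
  have hb : ∀ t ∈ I, NN (f t) ≤ 2 * n := fun t ht => by
    obtain ⟨_, _, _, _, h⟩ := hnear t ht; exact h
  -- gaps
  have hgap : ∀ a ∈ F, ∀ b ∈ F, a ∈ I → b ∈ I → a < b → (∀ s ∈ Ioo a b, s ∉ F) → PP f G a b := by
    intro a ha b hb' haI hbI hab hs
    set m := (a + b) / 2 with hm
    have hmab : m ∈ Ioo a b := ⟨by rw [hm]; linarith, by rw [hm]; linarith⟩
    have hmI : m ∈ I := hIcv haI hbI (Icc_subset_uIcc ⟨hmab.1.le, hmab.2.le⟩)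
    have q1 := (H.qq_of_gap hδ (a := a) (d := m) (hIδ haI hmI) (by
      intro s hs' hsa
      rw [uIcc_of_le hmab.1.le] at hs'
      have := hs s ⟨lt_of_le_of_ne hs'.1 (Ne.symm hsa), hs'.2.trans_lt hmab.2⟩
      exact not_not.1 this)).1
    have q2 := (H.qq_of_gap hδ (a := b) (d := m) (hIδ hbI hmI) (by
      intro s hs' hsa
      rw [uIcc_of_ge hmab.2.le] at hs'
      have := hs s ⟨hmab.1.trans_le hs'.1, lt_of_le_of_ne hs'.2 hsa⟩
      exact not_not.1 this)).1
    exact (H.qq_trans q1 q2.symm).2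
  have hgapae : ∀ᵐ z : ℝ × ℝ, ∀ q : ℚ, ∀ a ∈ F, ∀ b ∈ F, a ∈ I → b ∈ I → a < q → (q : ℝ) < b →
      (∀ s ∈ Ioo a b, s ∉ F) → f b (sh b z) - f a (sh a z) = ∫ r in a..b, G r (sh r z) := by
    rw [ae_all_iff]
    intro q
    by_cases hex : ∃ a ∈ F, ∃ b ∈ F, a ∈ I ∧ b ∈ I ∧ a < q ∧ (q : ℝ) < b ∧ (∀ s ∈ Ioo a b, s ∉ F)
    · obtain ⟨a, ha, b, hb', haI, hbI, h1, h2, h3⟩ := hex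
      filter_upwards [hgap a ha b hb' haI hbI (h1.trans h2) h3] with z hz
      intro a' ha' b' hb'' haI' hbI' h1' h2' h3'
      have e1 : a' = a := by
        rcases lt_trichotomy a' a with h | h | h
        · exact absurd ha (h3' a ⟨h, h1.trans h2'⟩)
        · exact h
        · exact absurd ha' (h3 a' ⟨h, h1'.trans h2⟩)
      have e2 : b' = b := by
        rcases lt_trichotomy b' b with h | h | h
        · exact absurd hb'' (h3 b' ⟨h1.trans h2', h⟩)
        · exact h
        · exact absurd hb' (h3' b ⟨h1'.trans h2, h⟩)
      rw [e1, e2]; exact hz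
    · refine Eventually.of_forall fun z a ha b hb' haI hbI h1 h2 h3 => ?_
      exact absurd ⟨a, ha, b, hb', haI, hbI, h1, h2, h3⟩ hex
  have hFF : ∀ c ∈ F, ∀ d ∈ F, c ∈ I → d ∈ I → c ≤ d → QQ f G c d := by
    intro c hc d hd hcI hdI hcd
    have hbb : ∀ r ∈ uIcc c d, NN (f r) ≤ 2 * n := fun r hr => hb r (hIcv hcI hdI hr)
    refine ⟨⟨_, hMt, hbb⟩, ?_⟩
    filter_upwards [hgapae, H.intG hMt hbb] with z hz hi
    have hsubI : Icc c d ⊆ I := Icc_subset_uIcc.trans (hIcv hcI hdI)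
    refine ftc_closed F hFc hcd hc hd (fun s => f s (sh s z)) (fun r => G r (sh r z)) ?_ ?_ ?_
    · rw [integrableOn_Icc_iff_integrableOn_Ioc]
      exact (intervalIntegrable_iff_integrableOn_Ioc_of_le hcd).1 hi
    · intro t ht
      exact H.rel_deriv (fun s hs => hFI s hs.1 (hsubI hs.2)) z
    · intro a ha b hb' hca hab hbd hs
      obtain ⟨q, hq1, hq2⟩ := exists_rat_btwn hab
      exact hz q a ha b hb' (hsubI ⟨hca, hab.le.trans hbd⟩) (hsubI ⟨hca.trans hab.le, hbd⟩) hq1 hq2 hs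
  refine ht0F ⟨ε, hεp, fun c hc d hd => ?_⟩
  obtain ⟨a, haF, haI, hqa, -⟩ := hnear c hc
  obtain ⟨b, hbF, hbI, hqb, -⟩ := hnear d hd
  have hab : QQ f G a b := by
    rcases le_total a b with h | h
    · exact hFF a haF b hbF haI hbI h
    · exact (hFF b hbF a haF hbI haI h).symm
  exact H.qq_trans hqa.symm (H.qq_trans hab hqb)

end WBGK

namespace WBGK
open Set Filter Topology
open scoped ENNReal NNReal
variable {f G : ℝ → ℝ × ℝ → ℝ} {C : ℝ≥0}

lemma enorm_le_wt {k : ℝ} {z : ℝ × ℝ} (hk : |k| ≤ 1 + z.1 ^ 2) : ‖k‖ₑ ≤ wt z := by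
  rw [Real.enorm_eq_ofReal_abs]; exact ENNReal.ofReal_le_ofReal hk

lemma integrable_of_NN {g k : ℝ × ℝ → ℝ} (hg : Measurable g) (hk : Measurable k)
    (hkb : ∀ z, |k z| ≤ 1 + z.1 ^ 2) (h : NN g < ⊤) : Integrable (fun z => k z * g z) := by
  refine ⟨(hk.mul hg).aestronglyMeasurable, ?_⟩
  rw [hasFiniteIntegral_iff_enorm]
  refine lt_of_le_of_lt (lintegral_mono fun z => ?_) h
  rw [enorm_mul]
  gcongr
  exact enorm_le_wt (hkb z)

lemma int_sh (t : ℝ) {g : ℝ × ℝ → ℝ} (hg : Measurable g) :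
    ∫ z, g (sh t z) = ∫ z, g z := by
  conv_rhs => rw [← (sh_mp t).map_eq]
  rw [integral_map (sh_mp t).measurable.aemeasurable hg.aestronglyMeasurable]

lemma Dyn.diff (H : Dyn f G C) {c d : ℝ} {M : ℝ≥0∞} (hM : ∀ r ∈ uIcc c d, NN (f r) ≤ M) :
    ∫⁻ z, wt z * ‖f d (sh d z) - f c (sh c z)‖ₑ ≤ C * M * ENNReal.ofReal |d - c| := by
  refine le_trans (lintegral_mono_ae ?_) (H.lintG hM)
  filter_upwards [(H.all c d).2] with z hz
  gcongr
  rw [hz, ← enorm_norm, intervalIntegral.norm_intervalIntegral_eq, enorm_norm]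
  exact enorm_integral_le_lintegral_enorm _

lemma sq_bd (z : ℝ × ℝ) : |z.1 ^ 2| ≤ 1 + z.1 ^ 2 := by
  rw [abs_of_nonneg (sq_nonneg _)]; linarith

lemma abs_bd (z : ℝ × ℝ) : |z.1| ≤ 1 + z.1 ^ 2 := by
  rw [← sq_abs]; nlinarith [sq_nonneg (|z.1| - 1), abs_nonneg z.1]

lemma Dyn.cont (H : Dyn f G C) (W : ℝ → ℝ) (hWc : Continuous W) {B L : ℝ≥0} (hB : ∀ x, |W x| ≤ B)
    (hL : ∀ x y, |W x - W y| ≤ L * |x - y|) :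
    Continuous (fun t => ∫ z : ℝ × ℝ, z.1 * f t z * W z.2) := by
  have hint : ∀ t, Integrable (fun z : ℝ × ℝ => z.1 * f t (sh t z) * W (sh t z).2) := by
    intro t
    have h1 : Integrable (fun z : ℝ × ℝ => z.1 * f t z) :=
      integrable_of_NN (H.fc t).measurable measurable_fst abs_bd (H.fin t)
    have h2 : Integrable (fun z : ℝ × ℝ => z.1 * f t z * W z.2) := by
      refine h1.mul_bdd (c := B) (hWc.comp continuous_snd).aestronglyMeasurable ?_
      exact Eventually.of_forall fun z => hB _
    exact (sh_mp t).integrable_comp_of_integrable h2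
  have e : ∀ t, ∫ z : ℝ × ℝ, z.1 * f t z * W z.2 = ∫ z : ℝ × ℝ, z.1 * f t (sh t z) * W (sh t z).2 := by
    intro t
    refine (int_sh t (g := fun z => z.1 * f t z * W z.2) ?_).symm
    exact (measurable_fst.mul (H.fc t).measurable).mul (hWc.measurable.comp measurable_snd)
  simp only [e]
  rw [continuous_iff_continuousAt]
  intro s
  obtain ⟨⟨M, hMt, hM⟩, -⟩ := H.all (s - 1) (s + 1)
  rw [uIcc_of_le (by linarith)] at hM
  rw [ContinuousAt, tendsto_iff_edist_tendsto_0]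
  have hbound : ∀ t ∈ Icc (s - 1) (s + 1),
      edist (∫ z : ℝ × ℝ, z.1 * f t (sh t z) * W (sh t z).2)
        (∫ z : ℝ × ℝ, z.1 * f s (sh s z) * W (sh s z).2) ≤
      (B * (C * M) + L * NN (f s)) * ENNReal.ofReal |t - s| := by
    intro t ht
    have hsub : uIcc s t ⊆ Icc (s - 1) (s + 1) := by
      have : OrdConnected (Icc (s - 1) (s + 1)) := ordConnected_Icc
      exact this.uIcc_subset ⟨by linarith, by linarith⟩ ht
    rw [edist_eq_enorm_sub, ← integral_sub (hint t) (hint s)]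
    refine (enorm_integral_le_lintegral_enorm _).trans ?_
    have hm1 : Measurable fun z : ℝ × ℝ => wt z * ‖f t (sh t z) - f s (sh s z)‖ₑ :=
      wt_meas.mul (((H.fc t).measurable.comp (sh_meas t)).sub
        ((H.fc s).measurable.comp (sh_meas s))).enorm
    have hm2 : Measurable fun z : ℝ × ℝ => wt z * ‖f s (sh s z)‖ₑ :=
      wt_meas.mul ((H.fc s).measurable.comp (sh_meas s)).enorm
    calc ∫⁻ z : ℝ × ℝ, ‖z.1 * f t (sh t z) * W (sh t z).2 - z.1 * f s (sh s z) * W (sh s z).2‖ₑ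
        ≤ ∫⁻ z : ℝ × ℝ, (B * (wt z * ‖f t (sh t z) - f s (sh s z)‖ₑ) +
            L * ENNReal.ofReal |t - s| * (wt z * ‖f s (sh s z)‖ₑ)) := by
          refine lintegral_mono fun z => ?_
          have e1 : z.1 * f t (sh t z) * W (sh t z).2 - z.1 * f s (sh s z) * W (sh s z).2 =
            W (sh t z).2 * (z.1 * (f t (sh t z) - f s (sh s z))) +
              (z.1 * (W (sh t z).2 - W (sh s z).2)) * f s (sh s z) := by ring
          rw [e1]
          refine (enorm_add_le _ _).trans (add_le_add ?_ ?_)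
          · rw [enorm_mul, enorm_mul]
            gcongr
            · rw [Real.enorm_eq_ofReal_abs, ← ENNReal.ofReal_coe_nnreal]
              exact ENNReal.ofReal_le_ofReal (hB _)
            · exact enorm_le_wt (abs_bd z)
          · rw [enorm_mul, ← mul_assoc]
            gcongr
            rw [Real.enorm_eq_ofReal_abs, ← ENNReal.ofReal_coe_nnreal,
              ← ENNReal.ofReal_mul (by positivity), wt, ← ENNReal.ofReal_mul (by positivity)]
            apply ENNReal.ofReal_le_ofReal
            rw [abs_mul]
            have h1 := hL (sh t z).2 (sh s z).2
            have h2 : (sh t z).2 - (sh s z).2 = (t - s) * z.1 := by simp only [sh]; ring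
            rw [h2, abs_mul] at h1
            calc |z.1| * |W (sh t z).2 - W (sh s z).2| ≤ |z.1| * (L * (|t - s| * |z.1|)) := by gcongr
              _ = L * |t - s| * z.1 ^ 2 := by rw [← sq_abs z.1]; ring
              _ ≤ L * |t - s| * (1 + z.1 ^ 2) := by gcongr; linarith
      _ = B * (∫⁻ z : ℝ × ℝ, wt z * ‖f t (sh t z) - f s (sh s z)‖ₑ) +
            L * ENNReal.ofReal |t - s| * ∫⁻ z : ℝ × ℝ, wt z * ‖f s (sh s z)‖ₑ := by
          rw [lintegral_add_left (hm1.const_mul _), lintegral_const_mul _ hm1,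
            lintegral_const_mul _ hm2]
      _ ≤ B * (C * M * ENNReal.ofReal |t - s|) + L * ENNReal.ofReal |t - s| * NN (f s) := by
          rw [NN_sh s (f s) (H.fc s).measurable]
          gcongr
          exact H.diff fun r hr => hM r (hsub hr)
      _ = _ := by ring
  have hlim : Tendsto (fun t => (B * (C * M) + L * NN (f s)) * ENNReal.ofReal |t - s|) (𝓝 s)
      (𝓝 ((B * (C * M) + L * NN (f s)) * ENNReal.ofReal |s - s|)) := by
    refine ENNReal.Tendsto.const_mul ?_ (Or.inr ?_)
    · exact (ENNReal.continuous_ofReal.comp (by fun_prop : Continuous fun t => |t - s|)).tendsto s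
    · exact ENNReal.add_ne_top.2 ⟨ENNReal.mul_ne_top ENNReal.coe_ne_top
        (ENNReal.mul_ne_top ENNReal.coe_ne_top hMt.ne),
        ENNReal.mul_ne_top ENNReal.coe_ne_top (H.fin s).ne⟩
  simp only [sub_self, abs_zero, ENNReal.ofReal_zero, mul_zero] at hlim
  refine tendsto_of_tendsto_of_tendsto_of_le_of_le' tendsto_const_nhds hlim
    (Eventually.of_forall fun _ => zero_le) ?_
  filter_upwards [Icc_mem_nhds (show s - 1 < s by linarith) (show s < s + 1 by linarith)] with t ht
  exact hbound t ht

lemma Dyn.balance (H : Dyn f G C) (c d : ℝ) :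
    (∫ z : ℝ × ℝ, z.1 ^ 2 * f d z) - ∫ z : ℝ × ℝ, z.1 ^ 2 * f c z =
      ∫ r in c..d, ∫ z : ℝ × ℝ, z.1 ^ 2 * G r z := by
  obtain ⟨⟨M, hMt, hM⟩, hP⟩ := H.all c d
  have hsq : Measurable (fun z : ℝ × ℝ => z.1 ^ 2) := by fun_prop
  have e : ∀ t, ∫ z : ℝ × ℝ, z.1 ^ 2 * f t z = ∫ z : ℝ × ℝ, z.1 ^ 2 * f t (sh t z) := fun t =>
    (int_sh t (g := fun z => z.1 ^ 2 * f t z) (hsq.mul (H.fc t).measurable)).symm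
  have eG : ∀ t, ∫ z : ℝ × ℝ, z.1 ^ 2 * G t z = ∫ z : ℝ × ℝ, z.1 ^ 2 * G t (sh t z) := fun t =>
    (int_sh t (g := fun z => z.1 ^ 2 * G t z)
      (hsq.mul (H.Gm.comp measurable_prodMk_left))).symm
  have hint : ∀ t, Integrable (fun z : ℝ × ℝ => z.1 ^ 2 * f t (sh t z)) := fun t =>
    (sh_mp t).integrable_comp_of_integrable
      (integrable_of_NN (H.fc t).measurable hsq sq_bd (H.fin t))
  rw [e, e, ← integral_sub (hint d) (hint c)]
  simp only [eG]
  have hm : Measurable (fun p : (ℝ × ℝ) × ℝ => p.1.1 ^ 2 * G p.2 (sh p.2 p.1)) :=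
    (hsq.comp measurable_fst).mul (H.Gshm.comp measurable_swap)
  have hI : Integrable (fun p : (ℝ × ℝ) × ℝ => p.1.1 ^ 2 * G p.2 (sh p.2 p.1))
      ((volume : Measure (ℝ × ℝ)).prod ((volume : Measure ℝ).restrict (uIoc c d))) := by
    refine ⟨hm.aestronglyMeasurable, ?_⟩
    rw [hasFiniteIntegral_iff_enorm, lintegral_prod _ hm.enorm.aemeasurable]
    refine lt_of_le_of_lt ?_ (lt_of_le_of_lt (H.lintG hM) ?_)
    · refine lintegral_mono fun z => ?_
      have hmz : Measurable (fun r => ‖G r (sh r z)‖ₑ) := (H.Gshm.comp measurable_prodMk_right).enorm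
      rw [← lintegral_const_mul _ hmz]
      refine lintegral_mono fun r => ?_
      rw [enorm_mul]
      gcongr
      exact enorm_le_wt (sq_bd z)
    · exact (ENNReal.mul_ne_top (ENNReal.mul_ne_top ENNReal.coe_ne_top hMt.ne)
        ENNReal.ofReal_ne_top).lt_top
  calc ∫ z : ℝ × ℝ, (z.1 ^ 2 * f d (sh d z) - z.1 ^ 2 * f c (sh c z))
      = ∫ z : ℝ × ℝ, ∫ r in c..d, z.1 ^ 2 * G r (sh r z) := by
        refine integral_congr_ae ?_
        filter_upwards [hP] with z hz
        rw [intervalIntegral.integral_const_mul, ← hz]; ring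
    _ = ∫ r in c..d, ∫ z : ℝ × ℝ, z.1 ^ 2 * G r (sh r z) := by
        simp only [intervalIntegral.intervalIntegral_eq_integral_uIoc]
        rw [integral_smul, integral_integral_swap hI]

theorem Dyn.final (H : Dyn f G C) (W : ℝ → ℝ) (hWc : Continuous W) {B L : ℝ≥0}
    (hB : ∀ x, |W x| ≤ B) (hL : ∀ x y, |W x - W y| ≤ L * |x - y|)
    (hmom : ∀ t, ∫ z : ℝ × ℝ, z.1 ^ 2 * G t z = -2 * ∫ z : ℝ × ℝ, z.1 * f t z * W z.2) (t : ℝ) :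
    HasDerivAt (fun s => ∫ z : ℝ × ℝ, z.1 ^ 2 * f s z)
      (-2 * ∫ z : ℝ × ℝ, z.1 * f t z * W z.2) t := by
  have hc : Continuous (fun t => -2 * ∫ z : ℝ × ℝ, z.1 * f t z * W z.2) :=
    continuous_const.mul (H.cont W hWc hB hL)
  have e : (fun s => ∫ z : ℝ × ℝ, z.1 ^ 2 * f s z) = fun s => (∫ z : ℝ × ℝ, z.1 ^ 2 * f t z) +
      ∫ r in t..s, -2 * ∫ z : ℝ × ℝ, z.1 * f r z * W z.2 := by
    funext s
    have := H.balance t s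
    simp only [hmom] at this
    rw [← this]; ring
  rw [e]
  exact (intervalIntegral.integral_hasDerivAt_right (hc.intervalIntegrable _ _)
    (hc.stronglyMeasurableAtFilter _ _) hc.continuousAt).const_add _

end WBGK

namespace WBGK
open Set Filter Topology
open scoped ENNReal NNReal

open scoped FourierTransform SchwartzMap

/-- complexified Fourier transform of the potential -/
noncomputable def Vh (V : 𝓢(ℝ, ℝ)) : 𝓢(ℝ, ℂ) := 𝓕 (SchwartzMap.postcompCLM Complex.ofRealCLM V)

lemma Vh_apply (V : 𝓢(ℝ, ℝ)) (q : ℝ) :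
    Vh V q = ∫ s : ℝ, (V s : ℂ) * Complex.exp (-(2 * Real.pi * q * s : ℝ) * I) := by
  unfold Vh
  rw [SchwartzMap.fourier_coe, Real.fourier_real_eq_integral_exp_smul]
  refine integral_congr_ae (Eventually.of_forall fun s => ?_)
  simp
  rw [mul_comm]
  congr 2
  ring

noncomputable def aa (V : 𝓢(ℝ, ℝ)) (x q : ℝ) : ℂ :=
  Complex.exp ((2 * Real.pi * x * q : ℝ) * I) * Vh V q

lemma norm_aa (V : 𝓢(ℝ, ℝ)) (x q : ℝ) : ‖aa V x q‖ = ‖Vh V q‖ := by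
  unfold aa
  rw [norm_mul, Complex.norm_exp_ofReal_mul_I, one_mul]

lemma cont_aa (V : 𝓢(ℝ, ℝ)) (x : ℝ) : Continuous (aa V x) := by
  unfold aa
  have := (Vh V).continuous
  fun_prop

lemma int_aa (V : 𝓢(ℝ, ℝ)) (x : ℝ) (n : ℕ) : Integrable (fun q : ℝ => (q : ℂ) ^ n * aa V x q) := by
  refine ((Vh V).integrable_pow_mul volume n).mono' ?_ (Eventually.of_forall fun q => ?_)
  · have := cont_aa V x
    exact (by fun_prop : Continuous (fun q : ℝ => (q : ℂ) ^ n * aa V x q)).aestronglyMeasurable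
  · rw [norm_mul, norm_aa, norm_pow, Complex.norm_real]

lemma inv_deriv (V : 𝓢(ℝ, ℝ)) (x : ℝ) :
    ((deriv V x : ℝ) : ℂ) = 2 * Real.pi * I * ∫ q : ℝ, (q : ℂ) * aa V x q := by
  have hV : ∀ y, ((V y : ℝ) : ℂ) = ∫ q : ℝ, aa V y q := by
    intro y
    have h : (𝓕⁻ (Vh V)) y = (V y : ℂ) := by
      unfold Vh
      rw [FourierTransform.fourierInv_fourier_eq]
      simp
    rw [← h, SchwartzMap.fourierInv_coe, Real.fourierInv_eq' ]
    refine integral_congr_ae (Eventually.of_forall fun q => ?_)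
    simp [aa]
    left
    congr 1
    ring
  have h1 : HasDerivAt (fun y => ∫ q : ℝ, aa V y q)
      (∫ q : ℝ, 2 * Real.pi * I * ((q : ℂ) * aa V x q)) x := by
    refine (hasDerivAt_integral_of_dominated_loc_of_deriv_le (s := univ)
      (F' := fun y q => 2 * Real.pi * I * ((q : ℂ) * aa V y q))
      (bound := fun q => 2 * Real.pi * (‖q‖ ^ 1 * ‖Vh V q‖)) univ_mem ?_ ?_ ?_ ?_ ?_ ?_).2
    · exact Eventually.of_forall fun y => (cont_aa V y).aestronglyMeasurable
    · simpa using int_aa V x 0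
    · have := cont_aa V x
      exact (by fun_prop : Continuous (fun q : ℝ => 2 * Real.pi * I * ((q : ℂ) * aa V x q))).aestronglyMeasurable
    · refine Eventually.of_forall fun q y _ => ?_
      simp [norm_aa, abs_of_pos Real.pi_pos]
    · exact ((Vh V).integrable_pow_mul volume 1).const_mul _
    · refine Eventually.of_forall fun q y _ => ?_
      unfold aa
      have h0 : HasDerivAt (fun y : ℝ => ((2 * Real.pi * y * q : ℝ) : ℂ) * I) (((2 * Real.pi * q : ℝ) : ℂ) * I) y := by
        refine HasDerivAt.mul_const ?_ I
        refine HasDerivAt.ofReal_comp ?_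
        have := ((hasDerivAt_id y).const_mul (2 * Real.pi)).mul_const q
        simpa using this
      have := (h0.cexp).mul_const (Vh V q)
      refine this.congr_deriv ?_
      push_cast
      ring
  have h2 : HasDerivAt (fun y => ((V y : ℝ) : ℂ)) ((deriv V x : ℝ) : ℂ) x :=
    (V.differentiableAt.hasDerivAt).ofReal_comp
  rw [funext hV] at h2
  rw [h2.unique h1, integral_const_mul]

noncomputable def KK (ℏ : ℝ) (V : 𝓢(ℝ, ℝ)) (x p : ℝ) : ℂ :=
  (-Complex.I) / (2 * Real.pi * ℏ ^ 2) * 2 * (aa V x (-((Real.pi * ℏ)⁻¹ * p)) - aa V x ((Real.pi * ℏ)⁻¹ * p))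

lemma KK_eq {ℏ : ℝ} (hℏ : 0 < ℏ) (V : 𝓢(ℝ, ℝ)) (x p : ℝ) :
    (-Complex.I) / (2 * Real.pi * ℏ ^ 2) * ∫ y : ℝ, ((V (x + y / 2) - V (x - y / 2) : ℝ) : ℂ) *
      Complex.exp (Complex.I * y * p / ℏ) = KK ℏ V x p := by
  unfold KK
  rw [mul_assoc (_ / _) 2]
  congr 1
  have hp : (Real.pi : ℂ) ≠ 0 := by exact_mod_cast Real.pi_ne_zero
  have hh : (ℏ : ℂ) ≠ 0 := by exact_mod_cast hℏ.ne'
  have key : ∀ q : ℝ, ∫ s : ℝ, (V s : ℂ) * Complex.exp (-(2 * Real.pi * q * (s - x) : ℝ) * I) = aa V x q := by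
    intro q
    unfold aa
    rw [Vh_apply, ← integral_const_mul]
    refine integral_congr_ae (Eventually.of_forall fun s => ?_)
    simp only
    rw [mul_left_comm, ← Complex.exp_add]
    congr 2
    push_cast
    ring
  have i0 : Integrable (fun s : ℝ => V s) := V.integrable
  have i1 : Integrable (fun y : ℝ => ((V (x + y / 2) : ℝ) : ℂ) * Complex.exp (Complex.I * y * p / ℏ)) := by
    have : Integrable (fun y : ℝ => V (x + y / 2)) := by
      have := (i0.comp_add_left x).comp_div (two_ne_zero)
      exact this
    refine this.norm.mono' ?_ (Eventually.of_forall fun y => ?_)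
    · have := V.continuous
      exact (by fun_prop : Continuous _).aestronglyMeasurable
    · rw [norm_mul, Complex.norm_real, show I * y * p / ℏ = ((y * p / ℏ : ℝ) : ℂ) * I by push_cast; ring,
        Complex.norm_exp_ofReal_mul_I, mul_one]
  have i2 : Integrable (fun y : ℝ => ((V (x - y / 2) : ℝ) : ℂ) * Complex.exp (Complex.I * y * p / ℏ)) := by
    have : Integrable (fun y : ℝ => V (x - y / 2)) := by
      have := (i0.comp_sub_left x).comp_div (two_ne_zero)
      exact this
    refine this.norm.mono' ?_ (Eventually.of_forall fun y => ?_)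
    · have := V.continuous
      exact (by fun_prop : Continuous _).aestronglyMeasurable
    · rw [norm_mul, Complex.norm_real, show I * y * p / ℏ = ((y * p / ℏ : ℝ) : ℂ) * I by push_cast; ring,
        Complex.norm_exp_ofReal_mul_I, mul_one]
  have e1 : ∫ y : ℝ, ((V (x + y / 2) : ℝ) : ℂ) * Complex.exp (Complex.I * y * p / ℏ) =
      2 * aa V x (-((Real.pi * ℏ)⁻¹ * p)) := by
    rw [← key, ← integral_add_left_eq_self (μ := volume) (fun s : ℝ => (V s : ℂ) * _) x]
    have := Measure.integral_comp_div (fun s : ℝ => (V (x + s) : ℂ) *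
      Complex.exp (-(2 * Real.pi * (-((Real.pi * ℏ)⁻¹ * p)) * (x + s - x) : ℝ) * I)) 2
    rw [show (|(2:ℝ)|) = 2 by norm_num] at this
    rw [Complex.real_smul] at this
    push_cast at this ⊢
    rw [← this]
    refine integral_congr_ae (Eventually.of_forall fun y => ?_)
    simp only
    congr 2
    field_simp
    ring
  have e2 : ∫ y : ℝ, ((V (x - y / 2) : ℝ) : ℂ) * Complex.exp (Complex.I * y * p / ℏ) =
      2 * aa V x ((Real.pi * ℏ)⁻¹ * p) := by
    rw [← key, ← integral_sub_left_eq_self (fun s : ℝ => (V s : ℂ) * _) volume x]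
    have := Measure.integral_comp_div (fun s : ℝ => (V (x - s) : ℂ) *
      Complex.exp (-(2 * Real.pi * (((Real.pi * ℏ)⁻¹ * p)) * (x - s - x) : ℝ) * I)) 2
    rw [show (|(2:ℝ)|) = 2 by norm_num] at this
    rw [Complex.real_smul] at this
    push_cast at this ⊢
    rw [← this]
    refine integral_congr_ae (Eventually.of_forall fun y => ?_)
    simp only
    congr 2
    field_simp
    ring
  rw [mul_sub, ← e1, ← e2, ← integral_sub i1 i2]
  refine integral_congr_ae (Eventually.of_forall fun y => ?_)
  simp only
  push_cast
  ring

lemma theta_eq {ℏ : ℝ} (hℏ : 0 < ℏ) (V : 𝓢(ℝ, ℝ)) (g : ℝ → ℂ) (hg : Integrable g) (x v : ℝ) :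
    wignerTheta ℏ V g x v = ∫ w, g w * KK ℏ V x (v - w) := by
  unfold wignerTheta
  simp only [← KK_eq hℏ, ← mul_assoc, mul_comm (g _)]
  simp only [mul_assoc, integral_const_mul]
  congr 1
  simp only [← integral_const_mul, ← integral_mul_const]
  have i0 : Integrable (fun s : ℝ => V s) := V.integrable
  have iD : Integrable (fun y : ℝ => ((V (x + y / 2) - V (x - y / 2) : ℝ) : ℂ)) :=
    (((i0.comp_add_left x).comp_div (two_ne_zero)).sub
      ((i0.comp_sub_left x).comp_div (two_ne_zero))).ofReal
  rw [integral_integral_swap]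
  · refine integral_congr_ae (Eventually.of_forall fun w => ?_)
    simp only [← integral_const_mul]
    refine integral_congr_ae (Eventually.of_forall fun y => ?_)
    simp only
    rw [show I * (y * ((v - w : ℝ) : ℂ)) / ℏ = I * (y * v) / ℏ + -I * (y * w) / ℏ by push_cast; ring,
      Complex.exp_add]
    ring
  · refine (iD.mul_prod hg).norm.mono' ?_ (Eventually.of_forall fun z => ?_)
    · have h := (iD.mul_prod hg).aestronglyMeasurable
      have h2 : Continuous (fun z : ℝ × ℝ => exp (I * (z.1 * v) / ℏ) * exp (-I * (z.1 * z.2) / ℏ)) := by fun_prop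
      refine (h.mul h2.aestronglyMeasurable).congr (Eventually.of_forall fun z => ?_)
      simp only [Function.uncurry, Pi.mul_apply]
      ring
    · simp only [Function.uncurry, norm_mul]
      rw [show I * (z.1 * v) / ℏ = ((z.1 * v / ℏ : ℝ) : ℂ) * I by push_cast; ring,
        show -I * (z.1 * z.2) / ℏ = ((-(z.1 * z.2 / ℏ) : ℝ) : ℂ) * I by push_cast; ring,
        Complex.norm_exp_ofReal_mul_I, Complex.norm_exp_ofReal_mul_I]
      simp

end WBGK

namespace WBGK
open Set Filter Topology
open scoped ENNReal NNReal
open scoped FourierTransform SchwartzMap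

lemma conv_bound {K g : ℝ → ℂ} (hK : Measurable K) (hg : Measurable g) :
    ∫⁻ v, ENNReal.ofReal (1 + v ^ 2) * ‖∫ w, g w * K (v - w)‖ₑ ≤
      2 * (∫⁻ p, ENNReal.ofReal (1 + p ^ 2) * ‖K p‖ₑ) *
        ∫⁻ w, ENNReal.ofReal (1 + w ^ 2) * ‖g w‖ₑ := by
  have hwm : Measurable (fun v : ℝ => ENNReal.ofReal (1 + v ^ 2)) := by fun_prop
  calc ∫⁻ v, ENNReal.ofReal (1 + v ^ 2) * ‖∫ w, g w * K (v - w)‖ₑ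
      ≤ ∫⁻ v, ∫⁻ w, (2 * (ENNReal.ofReal (1 + w ^ 2) * ‖g w‖ₑ)) *
          (ENNReal.ofReal (1 + (v - w) ^ 2) * ‖K (v - w)‖ₑ) := by
        refine lintegral_mono fun v => ?_
        refine (mul_le_mul_right (enorm_integral_le_lintegral_enorm _) _).trans ?_
        rw [← lintegral_const_mul]
        swap
        · exact (hg.mul (hK.comp (measurable_const.sub measurable_id))).enorm
        refine lintegral_mono fun w => ?_
        have h : ENNReal.ofReal (1 + v ^ 2) ≤
            2 * ENNReal.ofReal (1 + w ^ 2) * ENNReal.ofReal (1 + (v - w) ^ 2) := by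
          rw [show (2 : ℝ≥0∞) = ENNReal.ofReal 2 by simp, ← ENNReal.ofReal_mul (by norm_num),
            ← ENNReal.ofReal_mul (by positivity)]
          apply ENNReal.ofReal_le_ofReal
          nlinarith [sq_nonneg (v - 2 * w), sq_nonneg (w * (v - w))]
        simp only [enorm_mul]
        calc _ ≤ (2 * ENNReal.ofReal (1 + w ^ 2) * ENNReal.ofReal (1 + (v - w) ^ 2)) * (‖g w‖ₑ * ‖K (v - w)‖ₑ) := by gcongr
          _ = _ := by ring
    _ = ∫⁻ w, ∫⁻ v, (2 * (ENNReal.ofReal (1 + w ^ 2) * ‖g w‖ₑ)) *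
          (ENNReal.ofReal (1 + (v - w) ^ 2) * ‖K (v - w)‖ₑ) := by
        rw [lintegral_lintegral_swap]
        refine Measurable.aemeasurable ?_
        simp only [Function.uncurry_def]
        fun_prop
    _ = ∫⁻ w, (2 * (ENNReal.ofReal (1 + w ^ 2) * ‖g w‖ₑ)) *
          ∫⁻ p, (ENNReal.ofReal (1 + p ^ 2) * ‖K p‖ₑ) := by
        refine lintegral_congr fun w => ?_
        rw [lintegral_const_mul _ (by fun_prop)]
        rw [lintegral_sub_right_eq_self (fun p => ENNReal.ofReal (1 + p ^ 2) * ‖K p‖ₑ) w]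
    _ = _ := by
        rw [lintegral_mul_const _ (by fun_prop), lintegral_const_mul _ (by fun_prop)]
        ring

lemma conv_moment {K g : ℝ → ℂ} (hK : ∀ n : ℕ, n ≤ 2 → Integrable (fun p : ℝ => (p : ℂ) ^ n * K p))
    (hg : ∀ n : ℕ, n ≤ 2 → Integrable (fun p : ℝ => (p : ℂ) ^ n * g p)) :
    Integrable (fun v : ℝ => (v : ℂ) ^ 2 * ∫ w, g w * K (v - w)) ∧
    ∫ v : ℝ, (v : ℂ) ^ 2 * ∫ w, g w * K (v - w) =
      (∫ w : ℝ, (w : ℂ) ^ 2 * g w) * (∫ p : ℝ, K p) + 2 * (∫ w : ℝ, (w : ℂ) * g w) * (∫ p : ℝ, (p : ℂ) * K p)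
      + (∫ w : ℝ, g w) * ∫ p : ℝ, (p : ℂ) ^ 2 * K p := by
  let L := ContinuousLinearMap.mul ℝ ℂ
  have hK0 : Integrable K := by simpa using hK 0 (by norm_num)
  have hg0 : Integrable g := by simpa using hg 0 (by norm_num)
  have hK1 : Integrable (fun p : ℝ => (p : ℂ) * K p) := by simpa using hK 1 (by norm_num)
  have hg1 : Integrable (fun p : ℝ => (p : ℂ) * g p) := by simpa using hg 1 (by norm_num)
  have hK2 := hK 2 le_rfl
  have hg2 := hg 2 le_rfl
  have e : (fun v : ℝ => (v : ℂ) ^ 2 * ∫ w, g w * K (v - w)) =ᵐ[volume]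
      fun v => (convolution (fun w : ℝ => (w : ℂ) ^ 2 * g w) K L volume v +
        2 * convolution (fun w : ℝ => (w : ℂ) * g w) (fun p : ℝ => (p : ℂ) * K p) L volume v) +
        convolution g (fun p : ℝ => (p : ℂ) ^ 2 * K p) L volume v := by
    filter_upwards [hg2.ae_convolution_exists L hK0, hg1.ae_convolution_exists L hK1,
      hg0.ae_convolution_exists L hK2] with v h1 h2 h3
    unfold convolution
    rw [← integral_const_mul, ← integral_const_mul, ← integral_add, ← integral_add]
    · refine integral_congr_ae (Eventually.of_forall fun w => ?_)
      simp only [L, ContinuousLinearMap.mul_apply']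
      push_cast
      ring
    · exact h1.integrable.add (h2.integrable.const_mul 2)
    · exact h3.integrable
    · exact h1.integrable
    · exact h2.integrable.const_mul 2
  have i1 := hg2.integrable_convolution L hK0
  have i2 := (hg1.integrable_convolution L hK1).const_mul 2
  have i3 := hg0.integrable_convolution L hK2
  have i12 : Integrable (fun v => convolution (fun w : ℝ => (w : ℂ) ^ 2 * g w) K L volume v +
        2 * convolution (fun w : ℝ => (w : ℂ) * g w) (fun p : ℝ => (p : ℂ) * K p) L volume v) :=
    i1.add i2
  refine ⟨((i1.add i2).add i3).congr e.symm, ?_⟩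
  rw [integral_congr_ae e, integral_add i12 i3, integral_add i1 i2, integral_const_mul,
    integral_convolution L hg2 hK0, integral_convolution L hg1 hK1, integral_convolution L hg0 hK2]
  simp only [L, ContinuousLinearMap.mul_apply']
  ring

lemma cont_KK (ℏ : ℝ) (V : 𝓢(ℝ, ℝ)) (x : ℝ) : Continuous (KK ℏ V x) := by
  unfold KK
  have := cont_aa V x
  fun_prop

lemma KK_odd (ℏ : ℝ) (V : 𝓢(ℝ, ℝ)) (x p : ℝ) : KK ℏ V x (-p) = - KK ℏ V x p := by
  unfold KK
  simp only [mul_neg, neg_neg]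
  ring

lemma int_KK {ℏ : ℝ} (hℏ : 0 < ℏ) (V : 𝓢(ℝ, ℝ)) (x : ℝ) (n : ℕ) :
    Integrable (fun p : ℝ => (p : ℂ) ^ n * KK ℏ V x p) := by
  have hp : (Real.pi : ℂ) ≠ 0 := by exact_mod_cast Real.pi_ne_zero
  have hh : (ℏ : ℂ) ≠ 0 := by exact_mod_cast hℏ.ne'
  have hs : (Real.pi * ℏ)⁻¹ ≠ 0 := by have := Real.pi_pos; positivity
  have h1 := (int_aa V x n).comp_mul_left' hs
  have h2 := ((int_aa V x n).comp_neg).comp_mul_left' hs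
  refine (((h2.const_mul ((-1) ^ n)).sub h1).const_mul ((-Complex.I) / (2 * Real.pi * ℏ ^ 2) * 2 * (Real.pi * ℏ) ^ n)).congr
    (Eventually.of_forall fun p => ?_)
  simp only [KK, Pi.sub_apply]
  have : ((-1 : ℂ)) ^ n * (((-((Real.pi * ℏ)⁻¹ * p) : ℝ) : ℂ)) ^ n = ((Real.pi * ℏ)⁻¹ * p) ^ n := by
    rw [← mul_pow]; push_cast; congr 1; ring
  rw [← mul_assoc ((-1) ^ n), this]
  push_cast
  rw [← mul_sub, ← mul_assoc, mul_assoc _ (((Real.pi : ℂ) * ℏ) ^ n), ← mul_pow, mul_inv_cancel_left₀ (mul_ne_zero hp hh)]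
  ring

lemma KK_m0 (ℏ : ℝ) (V : 𝓢(ℝ, ℝ)) (x : ℝ) : ∫ p, KK ℏ V x p = 0 := by
  have := integral_neg_eq_self (KK ℏ V x) volume
  simp only [KK_odd, integral_neg] at this
  linear_combination (-1 / 2) * this

lemma KK_m2 (ℏ : ℝ) (V : 𝓢(ℝ, ℝ)) (x : ℝ) : ∫ p : ℝ, (p : ℂ) ^ 2 * KK ℏ V x p = 0 := by
  have := integral_neg_eq_self (fun p : ℝ => (p : ℂ) ^ 2 * KK ℏ V x p) volume
  simp only [KK_odd, ofReal_neg, neg_sq, mul_neg, integral_neg] at this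
  linear_combination (-1 / 2) * this

lemma KK_m1 {ℏ : ℝ} (hℏ : 0 < ℏ) (V : 𝓢(ℝ, ℝ)) (x : ℝ) :
    ∫ p : ℝ, (p : ℂ) * KK ℏ V x p = (deriv V x : ℝ) := by
  have hp : (Real.pi : ℂ) ≠ 0 := by exact_mod_cast Real.pi_ne_zero
  have hh : (ℏ : ℂ) ≠ 0 := by exact_mod_cast hℏ.ne'
  have hs : 0 < (Real.pi * ℏ) := by have := Real.pi_pos; positivity
  rw [inv_deriv]
  have e : ∀ p : ℝ, (p : ℂ) * KK ℏ V x p = (fun q : ℝ => (-Complex.I) / (2 * Real.pi * ℏ ^ 2) * 2 * (Real.pi * ℏ) * (-1) *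
      ((((-q : ℝ) : ℂ) * aa V x (-q)) + q * aa V x q)) ((Real.pi * ℏ)⁻¹ * p) := by
    intro p
    simp only [KK]
    push_cast
    field_simp
    ring
  have i1 : Integrable (fun q : ℝ => (q : ℂ) * aa V x q) := by simpa using int_aa V x 1
  refine (integral_congr_ae (Eventually.of_forall e)).trans ?_
  rw [Measure.integral_comp_mul_left (fun q : ℝ => (-Complex.I) / (2 * Real.pi * ℏ ^ 2) * 2 * (Real.pi * ℏ) * (-1) *
      ((((-q : ℝ) : ℂ) * aa V x (-q)) + q * aa V x q)), integral_const_mul, integral_add i1.comp_neg i1,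
    integral_neg_eq_self (fun q : ℝ => (q : ℂ) * aa V x q), inv_inv, abs_of_pos hs, Complex.real_smul]
  push_cast
  field_simp
  ring_nf

noncomputable def kap0 (ℏ : ℝ) (V : 𝓢(ℝ, ℝ)) (p : ℝ) : ℝ :=
  ‖(-Complex.I) / (2 * Real.pi * ℏ ^ 2) * 2‖ *
    (‖Vh V (-((Real.pi * ℏ)⁻¹ * p))‖ + ‖Vh V ((Real.pi * ℏ)⁻¹ * p)‖)

lemma KK_le (ℏ : ℝ) (V : 𝓢(ℝ, ℝ)) (x p : ℝ) : ‖KK ℏ V x p‖ ≤ kap0 ℏ V p := by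
  unfold KK kap0
  rw [norm_mul]
  gcongr
  exact (norm_sub_le _ _).trans (by rw [norm_aa, norm_aa])

lemma kap0_int {ℏ : ℝ} (hℏ : 0 < ℏ) (V : 𝓢(ℝ, ℝ)) : Integrable (fun p : ℝ => (1 + p ^ 2) * kap0 ℏ V p) := by
  have hs : 0 < (Real.pi * ℏ) := by have := Real.pi_pos; positivity
  have a0 : Integrable (fun q => ‖Vh V q‖) := (Vh V).integrable.norm
  have a2 : Integrable (fun q => ‖q‖ ^ 2 * ‖Vh V q‖) := (Vh V).integrable_pow_mul volume 2
  have b : Integrable (fun q => (1 + (Real.pi * ℏ) ^ 2 * q ^ 2) * ‖Vh V q‖) := by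
    refine (a0.add (a2.const_mul ((Real.pi * ℏ) ^ 2))).congr (Eventually.of_forall fun q => ?_)
    simp only [Pi.add_apply, Real.norm_eq_abs, sq_abs]
    ring
  have c1 := b.comp_mul_left' (inv_ne_zero hs.ne')
  have c2 := b.comp_neg.comp_mul_left' (inv_ne_zero hs.ne')
  refine ((c2.add c1).const_mul ‖(-Complex.I) / (2 * Real.pi * ℏ ^ 2) * 2‖).congr (Eventually.of_forall fun p => ?_)
  simp only [kap0, Pi.add_apply]
  have : (Real.pi * ℏ) ^ 2 * ((Real.pi * ℏ)⁻¹ * p) ^ 2 = p ^ 2 := by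
    rw [← mul_pow, mul_inv_cancel_left₀ hs.ne']
  rw [neg_sq, this]
  ring

noncomputable def kap (ℏ : ℝ) (V : 𝓢(ℝ, ℝ)) : ℝ≥0 :=
  (2 * ∫⁻ p, ENNReal.ofReal ((1 + p ^ 2) * kap0 ℏ V p)).toNNReal

lemma theta_bound {ℏ : ℝ} (hℏ : 0 < ℏ) (V : 𝓢(ℝ, ℝ)) {g : ℝ → ℂ} (hm : Measurable g) (hg : Integrable g) (x : ℝ) :
    ∫⁻ v, ENNReal.ofReal (1 + v ^ 2) * ‖wignerTheta ℏ V g x v‖ₑ ≤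
      kap ℏ V * ∫⁻ w, ENNReal.ofReal (1 + w ^ 2) * ‖g w‖ₑ := by
  simp only [theta_eq hℏ V g hg]
  refine (conv_bound (cont_KK ℏ V x).measurable hm).trans ?_
  gcongr
  unfold kap
  rw [ENNReal.coe_toNNReal]
  · gcongr with p
    rw [ENNReal.ofReal_mul (by positivity)]
    gcongr
    rw [← ofReal_norm_eq_enorm]
    exact ENNReal.ofReal_le_ofReal (KK_le _ _ _ _)
  · exact ENNReal.mul_ne_top (by norm_num) (kap0_int hℏ V).lintegral_lt_top.ne

lemma theta_moment {ℏ : ℝ} (hℏ : 0 < ℏ) (V : 𝓢(ℝ, ℝ)) {g : ℝ → ℂ} 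
    (hg : ∀ n : ℕ, n ≤ 2 → Integrable (fun p : ℝ => (p : ℂ) ^ n * g p)) (x : ℝ) :
    Integrable (fun v : ℝ => (v : ℂ) ^ 2 * wignerTheta ℏ V g x v) ∧
    ∫ v : ℝ, (v : ℂ) ^ 2 * wignerTheta ℏ V g x v = 2 * (∫ w : ℝ, (w : ℂ) * g w) * (deriv V x : ℝ) := by
  have hg0 : Integrable g := by simpa using hg 0 (by norm_num)
  simp only [theta_eq hℏ V g hg0]
  obtain ⟨h1, h2⟩ := conv_moment (fun n _ => int_KK hℏ V x n) hg
  refine ⟨h1, ?_⟩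
  rw [h2, KK_m0, KK_m1 hℏ, KK_m2]
  ring

end WBGK

namespace WBGK
open Set Filter Topology
open scoped ENNReal NNReal
open scoped FourierTransform SchwartzMap

lemma gauss_moment (r u : ℝ) {T : ℝ} (hT : 0 < T) :
    Integrable (fun v : ℝ => r * (Real.sqrt (2 * Real.pi * T))⁻¹ * Real.exp (-(v - u) ^ 2 / (2 * T))) ∧
    Integrable (fun v : ℝ => v ^ 2 * (r * (Real.sqrt (2 * Real.pi * T))⁻¹ * Real.exp (-(v - u) ^ 2 / (2 * T)))) ∧
    ∫ v : ℝ, (r * (Real.sqrt (2 * Real.pi * T))⁻¹ * Real.exp (-(v - u) ^ 2 / (2 * T))) = r ∧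
    ∫ v : ℝ, v ^ 2 * (r * (Real.sqrt (2 * Real.pi * T))⁻¹ * Real.exp (-(v - u) ^ 2 / (2 * T))) = r * (u ^ 2 + T) := by
  obtain ⟨S, rfl⟩ : ∃ S : ℝ≥0, (S : ℝ) = T := ⟨⟨T, hT.le⟩, rfl⟩
  have hS : S ≠ 0 := by rintro rfl; simp at hT
  have e : ∀ v : ℝ, r * (Real.sqrt (2 * Real.pi * S))⁻¹ * Real.exp (-(v - u) ^ 2 / (2 * S)) =
      r * ProbabilityTheory.gaussianPDFReal u S v := by
    intro v; rw [ProbabilityTheory.gaussianPDFReal]; ring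
  simp only [e]
  have hmem := ProbabilityTheory.memLp_id_gaussianReal (μ := u) (v := S) 2
  have i2 : Integrable (fun v : ℝ => v ^ 2) (ProbabilityTheory.gaussianReal u S) := by
    simpa using hmem.integrable_sq
  have i2' : Integrable (fun v : ℝ => v ^ 2 * ProbabilityTheory.gaussianPDFReal u S v) := by
    rw [ProbabilityTheory.gaussianReal_of_var_ne_zero u hS,
      integrable_withDensity_iff_integrable_smul' (ProbabilityTheory.measurable_gaussianPDF u S)
        (Eventually.of_forall fun _ => ProbabilityTheory.gaussianPDF_lt_top)] at i2
    refine i2.congr (Eventually.of_forall fun v => ?_)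
    simp only [ProbabilityTheory.toReal_gaussianPDF, smul_eq_mul]
    ring
  have h2 : ∫ v, v ^ 2 * ProbabilityTheory.gaussianPDFReal u S v = u ^ 2 + S := by
    have h := ProbabilityTheory.variance_id_gaussianReal (μ := u) (v := S)
    rw [ProbabilityTheory.variance_eq_sub (by simpa using hmem)] at h
    have h1 := ProbabilityTheory.integral_id_gaussianReal (μ := u) (v := S)
    simp only [id_eq, Pi.pow_apply, h1] at h
    rw [ProbabilityTheory.integral_gaussianReal_eq_integral_smul hS] at h
    simp only [smul_eq_mul] at h
    rw [← h, ← integral_congr_ae (Eventually.of_forall fun v => mul_comm _ _)]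
    ring
  refine ⟨(ProbabilityTheory.integrable_gaussianPDFReal u S).const_mul r, ?_, ?_, ?_⟩
  · refine (i2'.const_mul r).congr (Eventually.of_forall fun v => ?_)
    simp only; ring
  · rw [integral_const_mul, ProbabilityTheory.integral_gaussianPDFReal_eq_one u hS, mul_one]
  · simp only [mul_left_comm _ r]
    rw [integral_const_mul, h2]

lemma slice {ℏ τ : ℝ} (hℏ : 0 < ℏ) (hτ : 0 < τ) (V : 𝓢(ℝ, ℝ)) {φ g E : ℝ → ℝ} {r u T x : ℝ}
    (hφ : Continuous φ) (hI : ∀ n : ℕ, n ≤ 2 → Integrable (fun p : ℝ => p ^ n * φ p))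
    (hr : r = ∫ v, φ v) (hr0 : 0 < r) (hu : r * u = ∫ v, v * φ v)
    (hT : r * T = ∫ v, (v - u) ^ 2 * φ v) (hT0 : 0 < T)
    (hE : ∀ v, E v = r * (Real.sqrt (2 * Real.pi * T))⁻¹ * Real.exp (-(v - u) ^ 2 / (2 * T)))
    (hg : ∀ v, ((g v : ℝ) : ℂ) + wignerTheta ℏ V (fun w => ((φ w : ℝ) : ℂ)) x v =
      (((E v - φ v) / τ : ℝ) : ℂ)) :
    ∫⁻ v, ENNReal.ofReal (1 + v ^ 2) * ‖g v‖ₑ ≤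
      ((2 * Real.toNNReal τ⁻¹ + kap ℏ V : ℝ≥0) : ℝ≥0∞) * ∫⁻ v, ENNReal.ofReal (1 + v ^ 2) * ‖φ v‖ₑ ∧
    ∫ v, v ^ 2 * g v = -2 * (deriv V x * ∫ v, v * φ v) := by
  have i0 : Integrable φ := by simpa using hI 0 (by norm_num)
  have i1 : Integrable (fun v => v * φ v) := by simpa using hI 1 (by norm_num)
  have i2 := hI 2 le_rfl
  obtain ⟨j0, j2, m0, m2⟩ := gauss_moment r u hT0
  simp only [← hE] at j0 j2 m0 m2
  have hEm : Measurable E := by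
    rw [funext hE]; fun_prop
  have hEn : ∀ v, 0 ≤ E v := fun v => by rw [hE]; positivity
  have hT' : ∫ v, v ^ 2 * φ v = r * (u ^ 2 + T) := by
    have : ∫ v, (v - u) ^ 2 * φ v = (∫ v, v ^ 2 * φ v) - 2 * u * (∫ v, v * φ v) + u ^ 2 * ∫ v, φ v := by
      have i12 : Integrable (fun v => v ^ 2 * φ v - 2 * u * (v * φ v)) := i2.sub (i1.const_mul _)
      rw [← integral_const_mul, ← integral_const_mul, ← integral_sub i2 (i1.const_mul _),
        ← integral_add i12 (i0.const_mul _)]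
      refine integral_congr_ae (Eventually.of_forall fun v => ?_)
      ring
    rw [← hT, ← hu, ← hr] at this
    linear_combination -this
  have hm2 : ∫ v, v ^ 2 * E v = ∫ v, v ^ 2 * φ v := by rw [m2, hT']
  have hφC : ∀ n : ℕ, n ≤ 2 → Integrable (fun p : ℝ => (p : ℂ) ^ n * (φ p : ℂ)) := by
    intro n hn
    have := (hI n hn).ofReal (𝕜 := ℂ)
    refine this.congr (Eventually.of_forall fun v => ?_)
    simp
  have hgr : ∀ v, g v = (E v - φ v) / τ - (wignerTheta ℏ V (fun w => ((φ w : ℝ) : ℂ)) x v).re := by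
    intro v
    have := congrArg Complex.re (hg v)
    simp only [add_re, ofReal_re] at this
    linarith
  have hmeasφ : Measurable (fun w => ((φ w : ℝ) : ℂ)) := by fun_prop
  constructor
  · have hEl : ∫⁻ v, ENNReal.ofReal (1 + v ^ 2) * ‖E v‖ₑ ≤ ∫⁻ v, ENNReal.ofReal (1 + v ^ 2) * ‖φ v‖ₑ := by
      have a1 : ∫⁻ v, ENNReal.ofReal (1 + v ^ 2) * ‖E v‖ₑ = ENNReal.ofReal (∫ v, (E v + v ^ 2 * E v)) := by
        have j02 : Integrable (fun v => E v + v ^ 2 * E v) := j0.add j2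
        rw [ofReal_integral_eq_lintegral_ofReal j02]
        · refine lintegral_congr fun v => ?_
          rw [Real.enorm_of_nonneg (hEn v), ← ENNReal.ofReal_mul (by positivity)]
          congr 1; ring
        · exact Eventually.of_forall fun v => add_nonneg (hEn v) (mul_nonneg (sq_nonneg _) (hEn v))
      have a2 : ∫ v, (E v + v ^ 2 * E v) = ∫ v, (φ v + v ^ 2 * φ v) := by
        rw [integral_add j0 j2, integral_add i0 i2, hm2, m0, hr]
      rw [a1, a2]
      refine (ENNReal.ofReal_le_ofReal (le_abs_self _)).trans ?_
      rw [← Real.norm_eq_abs, ofReal_norm]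
      refine (enorm_integral_le_lintegral_enorm _).trans (le_of_eq (lintegral_congr fun v => ?_))
      rw [show φ v + v ^ 2 * φ v = (1 + v ^ 2) * φ v by ring, enorm_mul, Real.enorm_of_nonneg (by positivity)]
    have hΘ := theta_bound hℏ V hmeasφ i0.ofReal x
    have hs : ∀ w : ℝ, ‖(φ w : ℂ)‖ₑ = ‖φ w‖ₑ := fun w => by
      rw [← ofReal_norm, ← ofReal_norm, Complex.norm_real]
    simp only [hs] at hΘ
    calc ∫⁻ v, ENNReal.ofReal (1 + v ^ 2) * ‖g v‖ₑ
        ≤ ∫⁻ v, ((Real.toNNReal τ⁻¹ : ℝ≥0∞) * (ENNReal.ofReal (1 + v ^ 2) * ‖E v‖ₑ) +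
            (Real.toNNReal τ⁻¹ : ℝ≥0∞) * (ENNReal.ofReal (1 + v ^ 2) * ‖φ v‖ₑ)) +
            ENNReal.ofReal (1 + v ^ 2) * ‖wignerTheta ℏ V (fun w => ((φ w : ℝ) : ℂ)) x v‖ₑ := by
          refine lintegral_mono fun v => ?_
          have : ‖g v‖ₑ ≤ (Real.toNNReal τ⁻¹ : ℝ≥0∞) * (‖E v‖ₑ + ‖φ v‖ₑ) + 
              ‖wignerTheta ℏ V (fun w => ((φ w : ℝ) : ℂ)) x v‖ₑ := by
            rw [hgr v]
            refine (enorm_sub_le).trans (add_le_add ?_ ?_)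
            · rw [div_eq_inv_mul, enorm_mul, Real.enorm_of_nonneg (inv_nonneg.2 hτ.le)]
              change ENNReal.ofReal _ * _ ≤ ENNReal.ofReal _ * _
              gcongr
              exact enorm_sub_le
            · rw [← ofReal_norm, ← ofReal_norm]
              exact ENNReal.ofReal_le_ofReal (Complex.abs_re_le_norm _)
          calc _ ≤ _ := mul_le_mul_right this _
            _ = _ := by ring
      _ = _ := by
          rw [lintegral_add_left (by fun_prop), lintegral_add_left (by fun_prop),
            lintegral_const_mul _ (by fun_prop), lintegral_const_mul _ (by fun_prop)]
      _ ≤ (Real.toNNReal τ⁻¹ : ℝ≥0∞) * (∫⁻ v, ENNReal.ofReal (1 + v ^ 2) * ‖φ v‖ₑ) +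
           (Real.toNNReal τ⁻¹ : ℝ≥0∞) * (∫⁻ v, ENNReal.ofReal (1 + v ^ 2) * ‖φ v‖ₑ) +
           kap ℏ V * ∫⁻ v, ENNReal.ofReal (1 + v ^ 2) * ‖φ v‖ₑ := by gcongr
      _ = _ := by push_cast; ring
  · obtain ⟨t1, t2⟩ := theta_moment hℏ V hφC x
    have t3 : ∫ v : ℝ, v ^ 2 * (wignerTheta ℏ V (fun w => ((φ w : ℝ) : ℂ)) x v).re = 2 * (∫ v, v * φ v) * deriv V x := by
      have e := integral_re t1
      have e2 : ∫ w : ℝ, (w : ℂ) * (φ w : ℂ) = ((∫ w, w * φ w : ℝ) : ℂ) := by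
        rw [← integral_complex_ofReal]; push_cast; rfl
      rw [t2, e2] at e
      have e3 : RCLike.re (2 * ((∫ w, w * φ w : ℝ) : ℂ) * ((deriv V x : ℝ) : ℂ)) = 2 * (∫ v, v * φ v) * deriv V x := by
        have : (2 * ((∫ w, w * φ w : ℝ) : ℂ) * ((deriv V x : ℝ) : ℂ)) = ((2 * (∫ v, v * φ v) * deriv V x : ℝ) : ℂ) := by push_cast; ring
        rw [this]; exact Complex.ofReal_re _
      rw [e3] at e
      rw [← e]
      refine integral_congr_ae (Eventually.of_forall fun v => ?_)
      have : (v : ℂ) ^ 2 = ((v ^ 2 : ℝ) : ℂ) := by push_cast; rfl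
      simp only [this]
      exact (Complex.re_ofReal_mul _ _).symm
    have t4 : Integrable (fun v : ℝ => v ^ 2 * (wignerTheta ℏ V (fun w => ((φ w : ℝ) : ℂ)) x v).re) := by
      refine t1.re.congr (Eventually.of_forall fun v => ?_)
      have : (v : ℂ) ^ 2 = ((v ^ 2 : ℝ) : ℂ) := by push_cast; rfl
      simp only [this]
      exact (Complex.re_ofReal_mul _ _)
    have e : ∀ v, v ^ 2 * g v = τ⁻¹ * (v ^ 2 * E v - v ^ 2 * φ v) -
        v ^ 2 * (wignerTheta ℏ V (fun w => ((φ w : ℝ) : ℂ)) x v).re := by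
      intro v; rw [hgr v]; ring
    simp only [e]
    have j22 : Integrable (fun v => τ⁻¹ * (v ^ 2 * E v - v ^ 2 * φ v)) := (j2.sub i2).const_mul _
    rw [integral_sub j22 t4, integral_const_mul, integral_sub j2 i2, hm2, t3]
    ring

end WBGK

namespace WBGK
open Set Filter Topology
open scoped ENNReal NNReal
open scoped FourierTransform SchwartzMap

lemma schwartz_lip {E F : Type*} [NormedAddCommGroup E] [NormedSpace ℝ E] [NormedAddCommGroup F]
    [NormedSpace ℝ F] (g : 𝓢(E, F)) : ∃ M : ℝ≥0, LipschitzWith M g := by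
  refine ⟨(SchwartzMap.seminorm ℝ 0 0 (SchwartzMap.fderivCLM ℝ E F g)).toNNReal, ?_⟩
  refine lipschitzWith_of_nnnorm_fderiv_le (𝕜 := ℝ) g.differentiable fun x => ?_
  have := SchwartzMap.norm_le_seminorm ℝ (SchwartzMap.fderivCLM ℝ E F g) x
  rw [SchwartzMap.fderivCLM_apply] at this
  exact NNReal.le_toNNReal_of_coe_le this

lemma schwartz_slice (g : 𝓢(ℝ × ℝ, ℝ)) (x : ℝ) (n : ℕ) : Integrable (fun v : ℝ => v ^ n * g (v, x)) := by
  have hI := integrable_inv_one_add_sq.const_mul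
    (SchwartzMap.seminorm ℝ n 0 g + SchwartzMap.seminorm ℝ (n + 2) 0 g)
  refine hI.mono' ?_ (Eventually.of_forall fun v => ?_)
  · have := g.continuous
    exact (by fun_prop : Continuous (fun v : ℝ => v ^ n * g (v, x))).aestronglyMeasurable
  · have hv : ‖v‖ ≤ ‖(v, x)‖ := norm_fst_le (v, x)
    have h1 := SchwartzMap.norm_pow_mul_le_seminorm ℝ g n (v, x)
    have h2 := SchwartzMap.norm_pow_mul_le_seminorm ℝ g (n + 2) (v, x)
    have h1' : ‖v‖ ^ n * ‖g (v, x)‖ ≤ SchwartzMap.seminorm ℝ n 0 g := le_trans (by gcongr) h1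
    have h2' : ‖v‖ ^ (n + 2) * ‖g (v, x)‖ ≤ SchwartzMap.seminorm ℝ (n + 2) 0 g := le_trans (by gcongr) h2
    rw [norm_mul, norm_pow, ← div_eq_mul_inv, le_div_iff₀ (by positivity)]
    have : v ^ 2 = ‖v‖ ^ 2 := by simp
    rw [this]
    calc _ = ‖v‖ ^ n * ‖g (v, x)‖ + ‖v‖ ^ (n + 2) * ‖g (v, x)‖ := by ring
      _ ≤ _ := add_le_add h1' h2'

lemma schwartz_NN (g : 𝓢(ℝ × ℝ, ℝ)) : NN g < ⊤ := by
  have h0 := (g.integrable (μ := volume)).norm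
  have h2 := g.integrable_pow_mul volume 2
  refine lt_of_le_of_lt ?_ (h0.add h2).lintegral_lt_top
  refine lintegral_mono fun z => ?_
  rw [wt, ← ofReal_norm, ← ENNReal.ofReal_mul (by positivity)]
  apply ENNReal.ofReal_le_ofReal
  have hv : ‖z.1‖ ≤ ‖z‖ := norm_fst_le z
  have : z.1 ^ 2 = ‖z.1‖ ^ 2 := by simp
  rw [this, add_mul, one_mul]
  simp only [Pi.add_apply]
  gcongr

lemma schwartz_hasDeriv (g : 𝓢(ℝ × ℝ, ℝ)) (v x : ℝ) :
    HasDerivAt (fun y => g (v, y)) (fderiv ℝ g (v, x) (0, 1)) x := by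
  have h1 : HasFDerivAt g (fderiv ℝ g (v, x)) (v, x) := g.differentiableAt.hasFDerivAt
  have h2 : HasDerivAt (fun y : ℝ => (v, y)) ((0 : ℝ), (1 : ℝ)) x :=
    (hasDerivAt_const x v).prodMk (hasDerivAt_id x)
  exact h1.comp_hasDerivAt x h2

lemma schwartz_SD (g : 𝓢(ℝ × ℝ, ℝ)) : ∃ n : ℕ, SD g n := by
  obtain ⟨M, hM⟩ := schwartz_lip (SchwartzMap.fderivCLM ℝ (ℝ × ℝ) ℝ g)
  obtain ⟨n, hn⟩ := exists_nat_ge (M : ℝ)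
  refine ⟨n, ?_⟩
  have key : ∀ v x a : ℝ, a ≠ 0 →
      |(g (v, x + a) - g (v, x)) / a - fderiv ℝ g (v, x) (0, 1)| ≤ M * |a| := by
    intro v x a ha
    have hd : ∀ y, ‖fderiv ℝ g (v, y) (0, 1) - fderiv ℝ g (v, x) (0, 1)‖ ≤ M * |y - x| := by
      intro y
      have h := hM.dist_le_mul (v, y) (v, x)
      rw [SchwartzMap.fderivCLM_apply, SchwartzMap.fderivCLM_apply, dist_eq_norm] at h
      have h1 := (fderiv ℝ g (v, y) - fderiv ℝ g (v, x)).le_opNorm ((0 : ℝ), (1 : ℝ))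
      have h2 : ‖((0 : ℝ), (1 : ℝ))‖ = 1 := by simp [Prod.norm_def]
      have h3 : dist (v, y) (v, x) = |y - x| := by simp [Prod.dist_eq, Real.dist_eq]
      rw [h2, mul_one] at h1
      rw [h3] at h
      exact h1.trans h
    have := (convex_uIcc x (x + a)).norm_image_sub_le_of_norm_hasDerivWithin_le
      (f := fun y => g (v, y) - y * fderiv ℝ g (v, x) (0, 1))
      (f' := fun y => fderiv ℝ g (v, y) (0, 1) - fderiv ℝ g (v, x) (0, 1)) (C := M * |a|) 
      (x := x) (y := x + a) ?_ ?_ left_mem_uIcc right_mem_uIcc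
    · have e : (g (v, x + a) - g (v, x)) / a - fderiv ℝ g (v, x) (0, 1) =
        ((g (v, x + a) - (x + a) * fderiv ℝ g (v, x) (0, 1)) - (g (v, x) - x * fderiv ℝ g (v, x) (0, 1))) / a := by
        field_simp; ring
      rw [e, abs_div, div_le_iff₀ (abs_pos.2 ha)]
      simpa using this
    · intro y _
      have := (schwartz_hasDeriv g v y).sub ((hasDerivAt_id y).mul_const (fderiv ℝ g (v, x) (0, 1)))
      rw [one_mul] at this
      exact this.hasDerivWithinAt
    · intro y hy
      refine (hd y).trans (mul_le_mul_of_nonneg_left ?_ M.2)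
      have := abs_sub_left_of_mem_uIcc hy
      simpa using this
  intro v x a b ha hb
  have h1 := key v x a ha
  have h2 := key v x b hb
  calc _ = |((g (v, x + a) - g (v, x)) / a - fderiv ℝ g (v, x) (0, 1)) -
        ((g (v, x + b) - g (v, x)) / b - fderiv ℝ g (v, x) (0, 1))| := by congr 1; ring
    _ ≤ M * |a| + M * |b| := (abs_sub _ _).trans (add_le_add h1 h2)
    _ ≤ n * (|a| + |b|) := by rw [mul_add]; gcongr

end WBGK

namespace WBGK
open Set Filter Topology
open scoped ENNReal NNReal
open scoped FourierTransform SchwartzMap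

lemma swap_schwartz (g : 𝓢(ℝ × ℝ, ℝ)) : ∃ g' : 𝓢(ℝ × ℝ, ℝ), ∀ v x, g' (v, x) = g (x, v) :=
  ⟨SchwartzMap.compCLMOfContinuousLinearEquiv ℝ (ContinuousLinearEquiv.prodComm ℝ ℝ ℝ) g,
    fun v x => rfl⟩

lemma meas_fx {F : ℝ → ℝ × ℝ → ℝ} (hm : Measurable (Function.uncurry F))
    (hd : ∀ t v x, DifferentiableAt ℝ (fun y => F t (v, y)) x) :
    Measurable (fun p : ℝ × ℝ × ℝ => deriv (fun y => F p.1 (p.2.1, y)) p.2.2) := by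
  have hlim : Tendsto (fun n : ℕ => 1 / ((n : ℝ) + 1)) atTop (𝓝[≠] 0) := by
    refine tendsto_nhdsWithin_iff.2 ⟨tendsto_one_div_add_atTop_nhds_zero_nat, ?_⟩
    exact Eventually.of_forall fun n => by
      have : (0 : ℝ) < 1 / ((n : ℝ) + 1) := by positivity
      exact this.ne'
  refine measurable_of_tendsto_metrizable (f := fun (n : ℕ) (p : ℝ × ℝ × ℝ) =>
    (1 / ((n : ℝ) + 1))⁻¹ • (F p.1 (p.2.1, p.2.2 + 1 / ((n : ℝ) + 1)) - F p.1 (p.2.1, p.2.2))) ?_ ?_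
  · intro n
    have h1 : Measurable (fun p : ℝ × ℝ × ℝ => F p.1 (p.2.1, p.2.2 + 1 / ((n : ℝ) + 1))) :=
      hm.comp (by fun_prop : Measurable (fun p : ℝ × ℝ × ℝ => (p.1, (p.2.1, p.2.2 + 1 / ((n : ℝ) + 1)))))
    have h2 : Measurable (fun p : ℝ × ℝ × ℝ => F p.1 (p.2.1, p.2.2)) := hm
    exact (h1.sub h2).const_smul ((1 / ((n : ℝ) + 1))⁻¹)
  · rw [tendsto_pi_nhds]
    intro p
    exact ((hd p.1 p.2.1 p.2.2).hasDerivAt.tendsto_slope_zero).comp hlim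

end WBGK

open WBGK Set Filter Topology in
open scoped ENNReal NNReal in
theorem main_aux (ℏ τ : ℝ) (hℏ : 0 < ℏ) (hτ : 0 < τ)
    (V : SchwartzMap ℝ ℝ)
    (f ft : ℝ → ℝ → ℝ → ℝ)
    (hfS : ∀ t : ℝ, ∃ g : SchwartzMap (ℝ × ℝ) ℝ, ∀ x v : ℝ, f t x v = g (x, v))
    (hftS : ∀ t : ℝ, ∃ g : SchwartzMap (ℝ × ℝ) ℝ, ∀ x v : ℝ, ft t x v = g (x, v))
    (hft : ∀ t x v : ℝ, HasDerivAt (fun s => f s x v) (ft t x v) t)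
    (hftc : ∀ x v : ℝ, Continuous fun t => ft t x v)
    (ρ u T : ℝ → ℝ → ℝ)
    (hρ : ∀ t x : ℝ, ρ t x = ∫ v : ℝ, f t x v)
    (hρpos : ∀ t x : ℝ, 0 < ρ t x)
    (hu : ∀ t x : ℝ, ρ t x * u t x = ∫ v : ℝ, v * f t x v)
    (hT : ∀ t x : ℝ, ρ t x * T t x = ∫ v : ℝ, (v - u t x) ^ 2 * f t x v)
    (hTpos : ∀ t x : ℝ, 0 < T t x)
    (feq : ℝ → ℝ → ℝ → ℝ)
    (hfeq : ∀ t x v : ℝ, feq t x v =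
      ρ t x * (Real.sqrt (2 * Real.pi * T t x))⁻¹ *
        Real.exp (-(v - u t x) ^ 2 / (2 * T t x)))
    (hPDE : ∀ t x v : ℝ,
      ((ft t x v : ℝ) : ℂ) + (v : ℂ) * ((deriv (fun y => f t y v) x : ℝ) : ℂ) +
          wignerTheta ℏ (⇑V) (fun w => ((f t x w : ℝ) : ℂ)) x v =
        (((feq t x v - f t x v) / τ : ℝ) : ℂ)) :
    ∀ t : ℝ, HasDerivAt (fun s => ∫ x : ℝ, ∫ v : ℝ, v ^ 2 * f s x v)
      (-2 * ∫ x : ℝ, ρ t x * u t x * deriv (⇑V) x) t := by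
  let F : ℝ → ℝ × ℝ → ℝ := fun t z => f t z.2 z.1
  let Ft : ℝ → ℝ × ℝ → ℝ := fun t z => ft t z.2 z.1
  let G : ℝ → ℝ × ℝ → ℝ := fun t z => ft t z.2 z.1 + z.1 * deriv (fun y => f t y z.1) z.2
  have hS : ∀ t, ∃ g : SchwartzMap (ℝ × ℝ) ℝ, F t = g := by
    intro t
    obtain ⟨g, hg⟩ := hfS t
    obtain ⟨g', hg'⟩ := swap_schwartz g
    exact ⟨g', funext fun z => by rw [show z = (z.1, z.2) from rfl, hg']; exact hg _ _⟩
  have hSt : ∀ t, ∃ g : SchwartzMap (ℝ × ℝ) ℝ, Ft t = g := by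
    intro t
    obtain ⟨g, hg⟩ := hftS t
    obtain ⟨g', hg'⟩ := swap_schwartz g
    exact ⟨g', funext fun z => by rw [show z = (z.1, z.2) from rfl, hg']; exact hg _ _⟩
  have hFc : ∀ t, Continuous (F t) := fun t => by
    obtain ⟨g, hg⟩ := hS t; rw [hg]; exact g.continuous
  have hFtc : ∀ t, Continuous (Ft t) := fun t => by
    obtain ⟨g, hg⟩ := hSt t; rw [hg]; exact g.continuous
  have hFm : Measurable (Function.uncurry F) :=
    measurable_uncurry_of_continuous_of_measurable
      (fun z => continuous_iff_continuousAt.2 fun t => (hft t z.2 z.1).continuousAt)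
      (fun t => (hFc t).measurable)
  have hFtm : Measurable (Function.uncurry Ft) :=
    measurable_uncurry_of_continuous_of_measurable
      (fun z => hftc z.2 z.1) (fun t => (hFtc t).measurable)
  have hFd : ∀ t v x, DifferentiableAt ℝ (fun y => F t (v, y)) x := fun t v x => by
    obtain ⟨g, hg⟩ := hS t; rw [hg]; exact (schwartz_hasDeriv g v x).differentiableAt
  have hGm : Measurable (Function.uncurry G) :=
    hFtm.add ((measurable_fst.comp measurable_snd).mul (meas_fx hFm hFd))
  have hGt : ∀ t, Measurable (G t) := fun t => hGm.comp measurable_prodMk_left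
  have hsl : ∀ t x, ∀ n : ℕ, n ≤ 2 → Integrable (fun p : ℝ => p ^ n * f t x p) := fun t x n _ => by
    obtain ⟨g, hg⟩ := hS t
    refine (schwartz_slice g x n).congr (Eventually.of_forall fun v => ?_)
    simp only [← hg, F]
  have hφ : ∀ t x, Continuous (f t x) := fun t x =>
    (hFc t).comp (by fun_prop : Continuous fun v : ℝ => (v, x))
  have SL := fun t x => slice hℏ hτ V (φ := f t x) (g := fun v => G t (v, x)) (E := feq t x)
    (r := ρ t x) (u := u t x) (T := T t x) (x := x) (hφ t x) (hsl t x) (hρ t x) (hρpos t x)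
    (hu t x) (hT t x) (hTpos t x) (hfeq t x) (fun v => by
      rw [← hPDE t x v]; simp only [G]; push_cast; rfl)
  have hfin : ∀ t, NN (F t) < ⊤ := fun t => by
    obtain ⟨g, hg⟩ := hS t; rw [hg]; exact schwartz_NN g
  have NNs : ∀ g : ℝ × ℝ → ℝ, Measurable g →
      NN g = ∫⁻ x : ℝ, ∫⁻ v : ℝ, ENNReal.ofReal (1 + v ^ 2) * ‖g (v, x)‖ₑ := by
    intro g hg
    exact lintegral_prod_symm _ (wt_meas.mul hg.enorm).aemeasurable
  have hbd : ∀ t, NN (G t) ≤ ((2 * Real.toNNReal τ⁻¹ + kap ℏ V : ℝ≥0) : ℝ≥0∞) * NN (F t) := by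
    intro t
    rw [NNs _ (hGt t), NNs _ (hFc t).measurable, ← lintegral_const_mul' _ _ ENNReal.coe_ne_top]
    exact lintegral_mono fun x => (SL t x).1
  have H : Dyn F G (2 * Real.toNNReal τ⁻¹ + kap ℏ V) :=
    { fm := hFm, Gm := hGm, fc := hFc
      ft := fun z => continuous_iff_continuousAt.2 fun t => (hft t z.2 z.1).continuousAt
      fin := hfin, bd := hbd
      der := fun t z => ⟨ft t z.2 z.1, deriv (fun y => f t y z.1) z.2, hft _ _ _,
        (hFd t z.1 z.2).hasDerivAt, rfl⟩
      sd := fun t => by obtain ⟨g, hg⟩ := hS t; rw [hg]; exact schwartz_SD g }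
  -- the force
  let W : SchwartzMap ℝ ℝ := SchwartzMap.derivCLM ℝ ℝ V
  have hW : ∀ x, W x = deriv V x := fun x => SchwartzMap.derivCLM_apply ℝ V x
  obtain ⟨L, hL⟩ := schwartz_lip W
  have hB : ∀ x, |W x| ≤ (SchwartzMap.seminorm ℝ 0 0 W).toNNReal := fun x =>
    (SchwartzMap.norm_le_seminorm ℝ W x).trans (Real.le_coe_toNNReal _)
  have hGfin : ∀ t, NN (G t) < ⊤ := fun t =>
    (hbd t).trans_lt (ENNReal.mul_lt_top ENNReal.coe_lt_top (hfin t))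
  have hsq : Measurable (fun z : ℝ × ℝ => z.1 ^ 2) := by fun_prop
  have hfl : ∀ t, ∫ z : ℝ × ℝ, z.1 * F t z * W z.2 = ∫ x : ℝ, ρ t x * u t x * deriv V x := by
    intro t
    have h1 : Integrable (fun z : ℝ × ℝ => z.1 * F t z) :=
      integrable_of_NN (hFc t).measurable measurable_fst abs_bd (hfin t)
    have h2 : Integrable (fun z : ℝ × ℝ => z.1 * F t z * W z.2) := by
      refine h1.mul_bdd (c := (SchwartzMap.seminorm ℝ 0 0 W).toNNReal)
        (W.continuous.comp continuous_snd).aestronglyMeasurable ?_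
      exact Eventually.of_forall fun z => hB _
    refine (integral_prod_symm _ h2).trans ?_
    refine integral_congr_ae (Eventually.of_forall fun x => ?_)
    simp only [hW]
    rw [integral_mul_const, hu]
  have hmom : ∀ t, ∫ z : ℝ × ℝ, z.1 ^ 2 * G t z = -2 * ∫ z : ℝ × ℝ, z.1 * F t z * W z.2 := by
    intro t
    rw [hfl, ← integral_const_mul]
    refine (integral_prod_symm _ (integrable_of_NN (hGt t) hsq sq_bd (hGfin t))).trans ?_
    refine integral_congr_ae (Eventually.of_forall fun x => ?_)
    simp only
    rw [(SL t x).2, hu]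
    ring
  intro t
  have fin := H.final W W.continuous hB (fun x y => by simpa [Real.dist_eq] using hL.dist_le_mul x y) hmom t
  rw [hfl] at fin
  have e : (fun s => ∫ x : ℝ, ∫ v : ℝ, v ^ 2 * f s x v) = fun s => ∫ z : ℝ × ℝ, z.1 ^ 2 * F s z := by
    funext s
    exact (integral_prod_symm _ (integrable_of_NN (hFc s).measurable hsq sq_bd (hfin s))).symm
  rw [e]
  exact fin

/-- Energy balance for the 1D Wigner–BGK equation: along a continuously differentiable
curve `t ↦ f(t)` of Schwartz functions of `(x,v)` solving
`∂f/∂t + v ∂f/∂x + Θ[V]f = (f_eq - f)/τ`, one has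
`d/dt ∫∫ v² f dx dv = -2 ∫ ρ u V' dx`. -/
theorem wignerBGK_energy_balance (ℏ τ : ℝ) (hℏ : 0 < ℏ) (hτ : 0 < τ)
    (V : SchwartzMap ℝ ℝ)
    (f ft : ℝ → ℝ → ℝ → ℝ)
    (hfS : ∀ t : ℝ, ∃ g : SchwartzMap (ℝ × ℝ) ℝ, ∀ x v : ℝ, f t x v = g (x, v))
    (hftS : ∀ t : ℝ, ∃ g : SchwartzMap (ℝ × ℝ) ℝ, ∀ x v : ℝ, ft t x v = g (x, v))
    (hft : ∀ t x v : ℝ, HasDerivAt (fun s => f s x v) (ft t x v) t)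
    (hftc : ∀ x v : ℝ, Continuous fun t => ft t x v)
    (ρ u T : ℝ → ℝ → ℝ)
    (hρ : ∀ t x : ℝ, ρ t x = ∫ v : ℝ, f t x v)
    (hρpos : ∀ t x : ℝ, 0 < ρ t x)
    (hu : ∀ t x : ℝ, ρ t x * u t x = ∫ v : ℝ, v * f t x v)
    (hT : ∀ t x : ℝ, ρ t x * T t x = ∫ v : ℝ, (v - u t x) ^ 2 * f t x v)
    (hTpos : ∀ t x : ℝ, 0 < T t x)
    (feq : ℝ → ℝ → ℝ → ℝ)
    (hfeq : ∀ t x v : ℝ, feq t x v =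
      ρ t x * (Real.sqrt (2 * Real.pi * T t x))⁻¹ *
        Real.exp (-(v - u t x) ^ 2 / (2 * T t x)))
    (hPDE : ∀ t x v : ℝ,
      ((ft t x v : ℝ) : ℂ) + (v : ℂ) * ((deriv (fun y => f t y v) x : ℝ) : ℂ) +
          wignerTheta ℏ (⇑V) (fun w => ((f t x w : ℝ) : ℂ)) x v =
        (((feq t x v - f t x v) / τ : ℝ) : ℂ)) :
    ∀ t : ℝ, HasDerivAt (fun s => ∫ x : ℝ, ∫ v : ℝ, v ^ 2 * f s x v)
      (-2 * ∫ x : ℝ, ρ t x * u t x * deriv (⇑V) x) t := by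
  exact main_aux ℏ τ hℏ hτ V f ft hfS hftS hft hftc ρ u T hρ hρpos hu hT hTpos feq hfeq hPDE
end

section
/- Equivalence of the integral and differential forms of the Wigner potential operator for polynomial potentials: let ħ > 0, x ∈ ℝ, let V : ℝ → ℝ be a polynomial of degree D, and let f : ℝ → ℂ be a Schwartz function. Then for every v ∈ ℝ the iterated integral defining (Θ[V]f)(x,v) converges and (Θ[V]f)(x,v) = - Σ_{λ odd, 1 ≤ λ ≤ D} ( (ħ/(2i))^{λ-1} / λ! ) V^{(λ)}(x) f^{(λ)}(v), where f^{(λ)} is the λ-th derivative of f and the sum runs over odd integers λ. -/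
open MeasureTheory Complex Polynomial Finset

open scoped FourierTransform in
lemma wig_exists_schwartz (f : SchwartzMap ℝ ℂ) (l : ℕ) :
    ∃ F : SchwartzMap ℝ ℂ, (⇑F : ℝ → ℂ) = iteratedDeriv l (⇑f) := by
  induction l with
  | zero => exact ⟨f, by simp⟩
  | succ n ih =>
    obtain ⟨F, hF⟩ := ih
    refine ⟨SchwartzMap.derivCLM ℂ ℂ F, ?_⟩
    rw [iteratedDeriv_succ, ← hF]
    rfl

open scoped FourierTransform in
lemma wig_fourier (f : SchwartzMap ℝ ℂ) (l : ℕ) (ξ : ℝ) :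
    𝓕 (iteratedDeriv l (⇑f)) ξ = (2 * Real.pi * I * ξ) ^ l * 𝓕 (⇑f : ℝ → ℂ) ξ := by
  have := Real.fourier_iteratedDeriv (f := (⇑f : ℝ → ℂ)) (N := ⊤) (n := l) (f.smooth ⊤)
    (fun n _ => by
      obtain ⟨F, hF⟩ := wig_exists_schwartz f n
      rw [← hF]; exact F.integrable) (by exact le_top)
  rw [this]
  rfl

open scoped FourierTransform in
lemma wig_inner (ℏ : ℝ) (hℏ : 0 < ℏ) (f : ℝ → ℂ) (y : ℝ) :
    ∫ w : ℝ, f w * Complex.exp (-Complex.I * y * w / ℏ) = 𝓕 f (y / (2 * Real.pi * ℏ)) := by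
  rw [Real.fourier_real_eq_integral_exp_smul]
  congr 1
  ext w
  rw [smul_eq_mul, mul_comm]
  congr 2
  have : (ℏ : ℂ) ≠ 0 := by exact_mod_cast hℏ.ne'
  have : (Real.pi : ℂ) ≠ 0 := by exact_mod_cast Real.pi_ne_zero
  push_cast
  field_simp

open scoped FourierTransform in
lemma wig_key (ℏ : ℝ) (hℏ : 0 < ℏ) (f : SchwartzMap ℝ ℂ) (v : ℝ) (l : ℕ) :
    Integrable (fun y : ℝ => (y : ℂ) ^ l * (Complex.exp (Complex.I * y * v / ℏ) *
        ∫ w : ℝ, f w * Complex.exp (-Complex.I * y * w / ℏ))) ∧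
    ∫ y : ℝ, (y : ℂ) ^ l * (Complex.exp (Complex.I * y * v / ℏ) *
        ∫ w : ℝ, f w * Complex.exp (-Complex.I * y * w / ℏ)) =
      2 * Real.pi * ℏ * ((ℏ / I) ^ l * iteratedDeriv l (⇑f) v) := by
  have h1 : (ℏ : ℂ) ≠ 0 := by exact_mod_cast hℏ.ne'
  have h2 : (Real.pi : ℂ) ≠ 0 := by exact_mod_cast Real.pi_ne_zero
  have hc : 0 < 2 * Real.pi * ℏ := by positivity
  obtain ⟨F, hF⟩ := wig_exists_schwartz f l
  set H : ℝ → ℂ := fun ξ => (ℏ / I) ^ l *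
    (Complex.exp (((2 * Real.pi * (ξ * v) : ℝ) : ℂ) * I) • 𝓕 (iteratedDeriv l (⇑f)) ξ) with hH
  have heq : (fun y : ℝ => (y : ℂ) ^ l * (Complex.exp (Complex.I * y * v / ℏ) *
        ∫ w : ℝ, f w * Complex.exp (-Complex.I * y * w / ℏ))) =
      fun y => H (y / (2 * Real.pi * ℏ)) := by
    ext y
    rw [wig_inner ℏ hℏ]
    simp only [hH]
    rw [wig_fourier, smul_eq_mul]
    have e1 : Complex.exp (Complex.I * y * v / ℏ) =
        Complex.exp (((2 * Real.pi * (y / (2 * Real.pi * ℏ) * v) : ℝ) : ℂ) * I) := by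
      congr 1
      push_cast
      field_simp
    have e2 : (y : ℂ) ^ l = (ℏ / I) ^ l *
        (2 * Real.pi * I * ((y / (2 * Real.pi * ℏ) : ℝ) : ℂ)) ^ l := by
      rw [← mul_pow]
      congr 1
      push_cast
      field_simp
    rw [e1, e2]
    ring
  have hFi : Integrable (𝓕 (iteratedDeriv l (⇑f))) := by
    rw [← hF, ← SchwartzMap.fourier_coe]
    exact (𝓕 F).integrable
  have hHi : Integrable H := by
    apply Integrable.const_mul
    refine hFi.bdd_mul (c := 1) (by fun_prop) ?_
    filter_upwards with ξ
    rw [Complex.norm_exp_ofReal_mul_I]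
  rw [heq]
  refine ⟨hHi.comp_div hc.ne', ?_⟩
  rw [MeasureTheory.Measure.integral_comp_div, abs_of_pos hc]
  simp only [hH]
  rw [integral_const_mul]
  have hinv : 𝓕⁻ (𝓕 (iteratedDeriv l (⇑f))) v = iteratedDeriv l (⇑f) v := by
    rw [Continuous.fourierInv_fourier_eq]
    · rw [← hF]; exact F.continuous
    · rw [← hF]; exact F.integrable
    · exact hFi
  rw [Real.fourierInv_eq'] at hinv
  have : (∫ ξ : ℝ, Complex.exp (((2 * Real.pi * (ξ * v) : ℝ) : ℂ) * I) •
      𝓕 (iteratedDeriv l (⇑f)) ξ) = iteratedDeriv l (⇑f) v := by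
    rw [← hinv]
    congr 1
    ext ξ
    simp [mul_comm]
  rw [this, Complex.real_smul]
  push_cast
  ring

lemma wig_taylor (V : Polynomial ℝ) (x t : ℝ) :
    V.eval (x + t) = ∑ l ∈ Finset.range (V.natDegree + 1),
      (Polynomial.derivative^[l] V).eval x / (l.factorial : ℝ) * t ^ l := by
  rw [add_comm, ← taylor_eval, eval_eq_sum_range, natDegree_taylor]
  refine Finset.sum_congr rfl fun l _ => ?_
  rw [taylor_coeff, ← factorial_smul_hasseDeriv]
  have : (l.factorial : ℝ) ≠ 0 := by exact_mod_cast l.factorial_ne_zero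
  rw [LinearMap.smul_apply, eval_smul, nsmul_eq_mul]
  field_simp

lemma wig_diff (V : Polynomial ℝ) (x y : ℝ) :
    ((V.eval (x + y / 2) - V.eval (x - y / 2) : ℝ) : ℂ) =
      ∑ l ∈ Finset.range (V.natDegree + 1), (if Odd l then
        2 / 2 ^ l * (((Polynomial.derivative^[l] V).eval x : ℝ) : ℂ) / (l.factorial : ℂ)
        else 0) * (y : ℂ) ^ l := by
  rw [sub_eq_add_neg x, wig_taylor, wig_taylor, ← Finset.sum_sub_distrib]
  push_cast
  refine Finset.sum_congr rfl fun l _ => ?_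
  split_ifs with h
  · rw [h.neg_pow, div_pow]; ring
  · rw [(Nat.not_odd_iff_even.1 h).neg_pow]; ring

theorem wignerTheta_eq_differential_form (ℏ : ℝ) (hℏ : 0 < ℏ) (x : ℝ)
    (V : Polynomial ℝ) (D : ℕ) (hD : V.natDegree = D) (f : SchwartzMap ℝ ℂ) (v : ℝ) :
    Integrable (fun y : ℝ =>
      ((V.eval (x + y / 2) - V.eval (x - y / 2) : ℝ) : ℂ) *
        Complex.exp (Complex.I * y * v / ℏ) *
        ∫ w : ℝ, f w * Complex.exp (-Complex.I * y * w / ℏ)) ∧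
    wignerTheta ℏ (fun y => V.eval y) (⇑f) x v =
      -∑ l ∈ Finset.range (D + 1),
        if Odd l then
          (((ℏ : ℂ) / (2 * Complex.I)) ^ (l - 1) / (l.factorial : ℂ)) *
            (((Polynomial.derivative^[l] V).eval x : ℝ) : ℂ) * iteratedDeriv l (⇑f) v
        else 0 := by
  subst hD
  have h1 : (ℏ : ℂ) ≠ 0 := by exact_mod_cast hℏ.ne'
  have h2 : (Real.pi : ℂ) ≠ 0 := by exact_mod_cast Real.pi_ne_zero
  unfold wignerTheta
  simp only [wig_diff, mul_assoc, Finset.sum_mul]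
  have key := wig_key ℏ hℏ f v
  simp only [mul_assoc] at key
  refine ⟨integrable_finsetSum _ fun l _ => (key l).1.const_mul _, ?_⟩
  rw [integral_finsetSum _ fun l _ => (key l).1.const_mul _, Finset.mul_sum,
    ← Finset.sum_neg_distrib]
  refine Finset.sum_congr rfl fun l _ => ?_
  rw [integral_const_mul, (key l).2]
  split_ifs with h
  · obtain ⟨k, rfl⟩ := h
    have h3 : ((2 * k + 1).factorial : ℂ) ≠ 0 := by exact_mod_cast Nat.factorial_ne_zero _
    rw [Nat.add_sub_cancel, div_pow, div_pow, mul_pow, pow_succ (ℏ : ℂ), pow_succ I,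
      pow_succ (2 : ℂ)]
    field_simp
    ring
  · simp
end

section
/- Hermite-expansion representation of the nonlocal Wigner potential term: let ħ > 0, T > 0, u ∈ ℝ, x ∈ ℝ, N ∈ ℕ, let V : ℝ → ℝ be a polynomial of degree D, and let f(v) = Σ_{n=0}^{N} f_n H_{T,n}((v-u)/√T) with real coefficients f_n. Then for all v ∈ ℝ, - Σ_{λ odd, 1 ≤ λ ≤ D} ( (ħ/(2i))^{λ-1} / λ! ) V^{(λ)}(x) f^{(λ)}(v) = Σ_{n=0}^{N+D} g_n H_{T,n}((v-u)/√T), where g_n = Σ_{λ odd, 1 ≤ λ ≤ min(n,D)} ( (ħ/(2i))^{λ-1} / λ! ) V^{(λ)}(x) f_{n-λ} (with f_m := 0 for m > N). -/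
open MeasureTheory Polynomial Finset

/-- The scaled Hermite basis function `H_{T,n}(ξ) = (2π)^{-1/2} T^{-(n+1)/2} He_n(ξ) e^{-ξ²/2}`,
where `He_n` is the probabilists' Hermite polynomial. -/
noncomputable def hermiteBasis (T : ℝ) (n : ℕ) (ξ : ℝ) : ℝ :=
  (Real.sqrt (2 * Real.pi))⁻¹ * T ^ (-(((n : ℝ) + 1) / 2)) *
    (Polynomial.aeval ξ) (Polynomial.hermite n) * Real.exp (-ξ ^ 2 / 2)

/-- Differentiation raises the index of the scaled Hermite functions. -/
lemma hermiteBasis_hasDerivAt (T u : ℝ) (hT : 0 < T) (n : ℕ) (v : ℝ) :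
    HasDerivAt (fun v : ℝ => hermiteBasis T n ((v - u) / Real.sqrt T))
      (-hermiteBasis T (n + 1) ((v - u) / Real.sqrt T)) v := by
  have h1 : HasDerivAt (fun v : ℝ => (v - u) / Real.sqrt T) (1 / Real.sqrt T) v :=
    ((hasDerivAt_id v).sub_const u).div_const _
  have h2 : ∀ ξ : ℝ, HasDerivAt (fun ξ : ℝ => hermiteBasis T n ξ)
      (-(Real.sqrt T * hermiteBasis T (n + 1) ξ)) ξ := by
    intro ξ
    have hp : HasDerivAt (fun ξ : ℝ => (Polynomial.aeval ξ) (Polynomial.hermite n))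
      ((Polynomial.aeval ξ) (derivative (Polynomial.hermite n))) ξ :=
      Polynomial.hasDerivAt_aeval _ _
    have he : HasDerivAt (fun ξ : ℝ => Real.exp (-ξ ^ 2 / 2))
        (Real.exp (-ξ ^ 2 / 2) * (-ξ)) ξ := by
      have h3 : HasDerivAt (fun ξ : ℝ => -ξ ^ 2 / 2) (-ξ) ξ := by
        have := ((hasDerivAt_pow 2 ξ).neg).div_const 2
        refine HasDerivAt.congr_deriv this ?_
        simp
        ring
      exact h3.exp
    have hTT : T ^ (-(((n : ℝ) + 1) / 2)) =
        Real.sqrt T * T ^ (-((((n + 1 : ℕ) : ℝ) + 1) / 2)) := by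
      rw [Real.sqrt_eq_rpow, ← Real.rpow_add hT]
      congr 1
      push_cast
      ring
    have := (hp.const_mul ((Real.sqrt (2 * Real.pi))⁻¹ * T ^ (-(((n : ℝ) + 1) / 2)))).mul he
    unfold hermiteBasis
    refine HasDerivAt.congr_deriv this ?_
    rw [hTT, Polynomial.hermite_succ]
    simp only [map_sub, map_mul, Polynomial.aeval_X]
    ring
  have h := (h2 ((v - u) / Real.sqrt T)).comp v h1
  have hs : Real.sqrt T ≠ 0 := (Real.sqrt_pos.2 hT).ne'
  refine HasDerivAt.congr_deriv h ?_
  field_simp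

/-- Iterated derivatives of a finite Hermite expansion. -/
lemma hermiteBasis_iteratedDeriv (T u : ℝ) (hT : 0 < T) (N : ℕ) (c : ℕ → ℝ) (l : ℕ) :
    iteratedDeriv l (fun v : ℝ => ∑ n ∈ Finset.range (N + 1),
      c n * hermiteBasis T n ((v - u) / Real.sqrt T)) =
    fun v : ℝ => ∑ n ∈ Finset.range (N + 1),
      c n * ((-1) ^ l * hermiteBasis T (n + l) ((v - u) / Real.sqrt T)) := by
  induction l with
  | zero => simp
  | succ l ih =>
    rw [iteratedDeriv_succ, ih]
    funext v
    apply HasDerivAt.deriv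
    apply HasDerivAt.fun_sum
    intro n _
    have := ((hermiteBasis_hasDerivAt T u hT (n + l) v).const_mul ((-1) ^ l)).const_mul (c n)
    refine HasDerivAt.congr_deriv this ?_
    rw [pow_succ, ← add_assoc]
    ring

/-- Reindexing of the convolution sum. -/
lemma hermite_reindex (N D : ℕ) (a c H : ℕ → ℝ) :
    ∑ l ∈ Finset.range (D + 1), ∑ n ∈ Finset.range (N + 1), a l * c n * H (n + l) =
    ∑ m ∈ Finset.range (N + D + 1), ∑ l ∈ Finset.range (min m D + 1),
      a l * (if m - l ≤ N then c (m - l) else 0) * H m := by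
  have : ∀ m l : ℕ, a l * (if m - l ≤ N then c (m - l) else 0) * H m =
      if m - l ≤ N then a l * c (m - l) * H m else 0 := by
    intro m l
    split_ifs <;> simp
  simp only [this]
  rw [Finset.sum_sigma', Finset.sum_sigma', ← Finset.sum_filter]
  refine Finset.sum_bij' (fun p _ => ⟨p.2 + p.1, p.1⟩) (fun p _ => ⟨p.2, p.1 - p.2⟩)
    ?_ ?_ ?_ ?_ ?_
  · rintro ⟨l, n⟩ h
    simp only [Finset.mem_sigma, Finset.mem_range, Finset.mem_filter] at h ⊢
    omega
  · rintro ⟨m, l⟩ h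
    simp only [Finset.mem_sigma, Finset.mem_range, Finset.mem_filter] at h ⊢
    omega
  · rintro ⟨l, n⟩ h
    simp
  · rintro ⟨m, l⟩ h
    simp only [Finset.mem_sigma, Finset.mem_range, Finset.mem_filter] at h
    have : m - l + l = m := by omega
    simp [this]
  · rintro ⟨l, n⟩ h
    simp

/-- Hermite-expansion representation of the nonlocal Wigner potential term: for a polynomial
potential `V` of degree `D` and `f(v) = Σ_{n=0}^N f_n H_{T,n}((v-u)/√T)`,
`- Σ_{λ odd, 1 ≤ λ ≤ D} ((-ℏ²/4)^{(λ-1)/2}/λ!) V^{(λ)}(x) f^{(λ)}(v)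
  = Σ_{n=0}^{N+D} g_n H_{T,n}((v-u)/√T)` with
`g_n = Σ_{λ odd, 1 ≤ λ ≤ min(n,D)} ((-ℏ²/4)^{(λ-1)/2}/λ!) V^{(λ)}(x) f_{n-λ}`. -/
theorem wigner_potential_hermite_expansion (ℏ T u x : ℝ) (hℏ : 0 < ℏ) (hT : 0 < T)
    (N : ℕ) (V : Polynomial ℝ) (D : ℕ) (hD : V.natDegree = D) (c : ℕ → ℝ) (f : ℝ → ℝ)
    (hf : ∀ v : ℝ, f v = ∑ n ∈ Finset.range (N + 1),
      c n * hermiteBasis T n ((v - u) / Real.sqrt T))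
    (g : ℕ → ℝ)
    (hg : ∀ n : ℕ, g n = ∑ l ∈ Finset.range (min n D + 1),
      if Odd l then
        ((-ℏ ^ 2 / 4) ^ ((l - 1) / 2) / (l.factorial : ℝ)) *
          (Polynomial.derivative^[l] V).eval x * (if n - l ≤ N then c (n - l) else 0)
      else 0) :
    ∀ v : ℝ,
      -(∑ l ∈ Finset.range (D + 1),
          if Odd l then
            ((-ℏ ^ 2 / 4) ^ ((l - 1) / 2) / (l.factorial : ℝ)) *
              (Polynomial.derivative^[l] V).eval x * iteratedDeriv l f v
          else 0) =
        ∑ n ∈ Finset.range (N + D + 1), g n * hermiteBasis T n ((v - u) / Real.sqrt T) := by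
  intro v
  have hfe : f = fun v : ℝ => ∑ n ∈ Finset.range (N + 1),
      c n * hermiteBasis T n ((v - u) / Real.sqrt T) := funext hf
  have key := hermite_reindex N D (fun l => if Odd l then
    ((-ℏ ^ 2 / 4) ^ ((l - 1) / 2) / (l.factorial : ℝ)) *
      (Polynomial.derivative^[l] V).eval x else 0) c
    (fun n => hermiteBasis T n ((v - u) / Real.sqrt T))
  calc _ = _ := ?_
    _ = _ := key
    _ = _ := ?_
  · rw [← Finset.sum_neg_distrib]
    refine Finset.sum_congr rfl fun l _ => ?_
    split_ifs with ho
    · rw [hfe, hermiteBasis_iteratedDeriv T u hT N c l, Finset.mul_sum,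
        ← Finset.sum_neg_distrib]
      refine Finset.sum_congr rfl fun n _ => ?_
      rw [ho.neg_one_pow]
      ring
    · simp
  · refine Finset.sum_congr rfl fun m _ => ?_
    rw [hg, Finset.sum_mul]
    refine Finset.sum_congr rfl fun l _ => ?_
    by_cases ho : Odd l
    · simp only [ho, if_true]
    · simp only [ho, if_false, zero_mul]
end

section
/- Global hyperbolicity of the regularized M=3 moment system in 1D: let ρ > 0, P > 0, u ∈ ℝ, f₃ ∈ ℝ, and set T = P/ρ. Let M be the 4×4 real matrix (the coefficient matrix of the quasi-linear system in the variables (ρ, u, P/2, f₃)) with rows [u, ρ, 0, 0], [0, u, 2/ρ, 0], [0, (3/2)P, u, 3], [-P²/(2ρ²), 0, P/ρ, u]. Then the characteristic polynomial of M is (λ-u)⁴ - 6T(λ-u)² + 3T² = T² He₄((λ-u)/√T); consequently M has four distinct real eigenvalues u + c√T with c ∈ { √(3+√6), -√(3+√6), √(3-√6), -√(3-√6) } (the roots of He₄), and M is diagonalizable over ℝ. -/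
open Matrix Polynomial

theorem aeval_hermite_four (x : ℝ) :
    (Polynomial.aeval x) (Polynomial.hermite 4) = x ^ 4 - 6 * x ^ 2 + 3 := by
  simp [hermite_succ]
  ring

/-- Global hyperbolicity of the regularized `M = 3` moment system in 1D: the coefficient
matrix of the quasi-linear system in `(ρ, u, P/2, f₃)` has characteristic polynomial
`(λ-u)⁴ - 6T(λ-u)² + 3T² = T² He₄((λ-u)/√T)`, four distinct real eigenvalues `u + c√T`
with `c` the roots `±√(3±√6)` of `He₄`, and is diagonalizable over `ℝ`. -/
theorem regularized_M3_hyperbolic (ρ P u f₃ : ℝ) (hρ : 0 < ρ) (hP : 0 < P)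
    (T : ℝ) (hT : T = P / ρ)
    (M : Matrix (Fin 4) (Fin 4) ℝ)
    (hM : M = !![u, ρ, 0, 0;
                 0, u, 2 / ρ, 0;
                 0, (3 / 2) * P, u, 3;
                 -P ^ 2 / (2 * ρ ^ 2), 0, P / ρ, u])
    (c : Fin 4 → ℝ)
    (hc : c = ![Real.sqrt (3 + Real.sqrt 6), -Real.sqrt (3 + Real.sqrt 6),
                Real.sqrt (3 - Real.sqrt 6), -Real.sqrt (3 - Real.sqrt 6)]) :
    (∀ l : ℝ,
      Matrix.det (l • (1 : Matrix (Fin 4) (Fin 4) ℝ) - M) =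
          (l - u) ^ 4 - 6 * T * (l - u) ^ 2 + 3 * T ^ 2 ∧
        (l - u) ^ 4 - 6 * T * (l - u) ^ 2 + 3 * T ^ 2 =
          T ^ 2 * (Polynomial.aeval ((l - u) / Real.sqrt T)) (Polynomial.hermite 4)) ∧
    (∀ i : Fin 4, (Polynomial.aeval (c i)) (Polynomial.hermite 4) = 0) ∧
    Function.Injective (fun i : Fin 4 => u + c i * Real.sqrt T) ∧
    ∃ Q : Matrix (Fin 4) (Fin 4) ℝ, IsUnit Q.det ∧
      Q⁻¹ * M * Q = Matrix.diagonal (fun i => u + c i * Real.sqrt T) := by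
  have hTpos : 0 < T := by rw [hT]; positivity
  have hP' : P = T * ρ := by rw [hT]; field_simp
  have h6 : Real.sqrt 6 ^ 2 = 6 := Real.sq_sqrt (by norm_num)
  have h6p : 0 < Real.sqrt 6 := Real.sqrt_pos.mpr (by norm_num)
  have h63 : Real.sqrt 6 < 3 := by nlinarith
  have ha : Real.sqrt (3 + Real.sqrt 6) ^ 2 = 3 + Real.sqrt 6 := Real.sq_sqrt (by linarith)
  have hb : Real.sqrt (3 - Real.sqrt 6) ^ 2 = 3 - Real.sqrt 6 := Real.sq_sqrt (by linarith)
  have hap : 0 < Real.sqrt (3 + Real.sqrt 6) := Real.sqrt_pos.mpr (by linarith)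
  have hbp : 0 < Real.sqrt (3 - Real.sqrt 6) := Real.sqrt_pos.mpr (by linarith)
  have hab : Real.sqrt (3 - Real.sqrt 6) < Real.sqrt (3 + Real.sqrt 6) :=
    Real.sqrt_lt_sqrt (by linarith) (by linarith)
  have hs : Real.sqrt T ^ 2 = T := Real.sq_sqrt hTpos.le
  have hsp : 0 < Real.sqrt T := Real.sqrt_pos.mpr hTpos
  have hroot : ∀ i : Fin 4, c i ^ 4 - 6 * c i ^ 2 + 3 = 0 := by
    have e : ∀ y : ℝ, y ^ 4 = (y ^ 2) ^ 2 := fun y => by ring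
    intro i
    subst hc
    fin_cases i <;> simp [e, ha, hb] <;> nlinarith
  have hcinj : Function.Injective c := by
    intro i j hij
    subst hc
    fin_cases i <;> fin_cases j <;> simp at hij ⊢ <;> linarith
  have hinj : Function.Injective (fun i : Fin 4 => c i * Real.sqrt T) := by
    intro i j hij
    exact hcinj (mul_right_cancel₀ hsp.ne' hij)
  refine ⟨fun l => ⟨?_, ?_⟩, ?_, ?_, ?_⟩
  · subst hM
    rw [hP']
    simp [Matrix.det_succ_row_zero, Fin.sum_univ_succ, Fin.succAbove, Matrix.one_apply]
    field_simp
    ring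
  · rw [aeval_hermite_four]
    generalize Real.sqrt T = s at hs hsp
    subst hs
    field_simp
  · intro i
    rw [aeval_hermite_four, hroot]
  · intro i j hij
    exact hinj (add_left_cancel hij)
  · have hx : ∀ i, (c i * Real.sqrt T) ^ 4 - 6 * T * (c i * Real.sqrt T) ^ 2 + 3 * T ^ 2 = 0 := by
      intro i
      have := hroot i
      generalize Real.sqrt T = s at hs
      subst hs
      linear_combination s ^ 4 * this
    obtain ⟨x, hxdef⟩ : ∃ x : Fin 4 → ℝ, ∀ i, x i = c i * Real.sqrt T := ⟨_, fun _ => rfl⟩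
    simp only [← hxdef] at hx hinj ⊢
    let L : Matrix (Fin 4) (Fin 4) ℝ :=
      !![ρ, 0, 0, 0; 0, 1, 0, 0; 0, 0, ρ / 2, 0; 0, -P / 2, 0, ρ / 6]
    have hL : L.det = ρ * (ρ / 2) * (ρ / 6) := by
      simp [L, Matrix.det_succ_row_zero, Fin.sum_univ_succ, Fin.succAbove]
      try ring
    have hQ : IsUnit (L * (Matrix.vandermonde x)ᵀ).det := by
      rw [Matrix.det_mul, Matrix.det_transpose, hL, isUnit_iff_ne_zero]
      exact mul_ne_zero (by positivity) (Matrix.det_vandermonde_ne_zero_iff.mpr hinj)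
    refine ⟨L * (Matrix.vandermonde x)ᵀ, hQ, ?_⟩
    have hMQ : M * (L * (Matrix.vandermonde x)ᵀ) =
        (L * (Matrix.vandermonde x)ᵀ) * Matrix.diagonal (fun i => u + x i) := by
      subst hM
      ext i j
      have hj := hx j
      rw [Matrix.mul_diagonal]
      fin_cases i <;>
        simp [L, Matrix.mul_apply, Fin.sum_univ_succ, Matrix.vandermonde_apply, Matrix.vecMul, dotProduct, hP']
      · ring
      · field_simp
      · ring
      · field_simp
        linear_combination (-2) * hj
    rw [Matrix.mul_assoc, hMQ, Matrix.nonsing_inv_mul_cancel_left _ _ hQ]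
end

section
/- Global hyperbolicity of the regularized M=4 moment system in 1D: let ρ > 0, P > 0, u ∈ ℝ, f₃, f₄ ∈ ℝ, and set T = P/ρ. Let M be the 5×5 real matrix (the coefficient matrix of the quasi-linear system in the variables (ρ, u, P/2, f₃, f₄)) with rows [u, ρ, 0, 0, 0], [0, u, 2/ρ, 0, 0], [0, (3/2)P, u, 3, 0], [-P²/(2ρ²), 4f₃, P/ρ, u, 4], [0, 0, -2f₃/ρ, P/ρ, u]. Then the characteristic polynomial of M is (λ-u)⁵ - 10T(λ-u)³ + 15T²(λ-u) = T^{5/2} He₅((λ-u)/√T); in particular it does not depend on f₃ or f₄, M has five distinct real eigenvalues u and u ± √((5±√10) T) (i.e. u + c√T for the roots c of He₅), and M is diagonalizable over ℝ. -/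
open Matrix Polynomial

theorem aux_hermite5 (x : ℝ) :
    (Polynomial.aeval x) (Polynomial.hermite 5) = x ^ 5 - 10 * x ^ 3 + 15 * x := by
  simp [Polynomial.hermite_succ, Polynomial.hermite_zero, Polynomial.derivative_mul]
  ring

/-- Global hyperbolicity of the regularized `M = 4` moment system in 1D: the coefficient
matrix of the quasi-linear system in `(ρ, u, P/2, f₃, f₄)` has characteristic polynomial
`(λ-u)⁵ - 10T(λ-u)³ + 15T²(λ-u) = T^{5/2} He₅((λ-u)/√T)` (independent of `f₃, f₄`),
five distinct real eigenvalues `u + c√T` with `c` the roots `0, ±√(5±√10)` of `He₅`,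
and is diagonalizable over `ℝ`. -/
theorem regularized_M4_hyperbolic (ρ P u f₃ f₄ : ℝ) (hρ : 0 < ρ) (hP : 0 < P)
    (T : ℝ) (hT : T = P / ρ)
    (M : Matrix (Fin 5) (Fin 5) ℝ)
    (hM : M = !![u, ρ, 0, 0, 0;
                 0, u, 2 / ρ, 0, 0;
                 0, (3 / 2) * P, u, 3, 0;
                 -P ^ 2 / (2 * ρ ^ 2), 4 * f₃, P / ρ, u, 4;
                 0, 0, -2 * f₃ / ρ, P / ρ, u])
    (c : Fin 5 → ℝ)
    (hc : c = ![0, Real.sqrt (5 + Real.sqrt 10), -Real.sqrt (5 + Real.sqrt 10),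
                Real.sqrt (5 - Real.sqrt 10), -Real.sqrt (5 - Real.sqrt 10)]) :
    (∀ l : ℝ,
      Matrix.det (l • (1 : Matrix (Fin 5) (Fin 5) ℝ) - M) =
          (l - u) ^ 5 - 10 * T * (l - u) ^ 3 + 15 * T ^ 2 * (l - u) ∧
        (l - u) ^ 5 - 10 * T * (l - u) ^ 3 + 15 * T ^ 2 * (l - u) =
          Real.sqrt T ^ 5 * (Polynomial.aeval ((l - u) / Real.sqrt T)) (Polynomial.hermite 5)) ∧
    (∀ i : Fin 5, (Polynomial.aeval (c i)) (Polynomial.hermite 5) = 0) ∧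
    Function.Injective (fun i : Fin 5 => u + c i * Real.sqrt T) ∧
    ∃ Q : Matrix (Fin 5) (Fin 5) ℝ, IsUnit Q.det ∧
      Q⁻¹ * M * Q = Matrix.diagonal (fun i => u + c i * Real.sqrt T) := by
  have hTpos : 0 < T := by rw [hT]; positivity
  have hs : 0 < Real.sqrt T := Real.sqrt_pos.mpr hTpos
  have hs2 : Real.sqrt T ^ 2 = T := Real.sq_sqrt hTpos.le
  have hPT : P = T * ρ := by rw [hT]; field_simp
  have h10 : Real.sqrt 10 ^ 2 = 10 := Real.sq_sqrt (by norm_num)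
  have h10p : 0 < Real.sqrt 10 := Real.sqrt_pos.mpr (by norm_num)
  have h10l : Real.sqrt 10 < 5 := by nlinarith
  have ha2 : Real.sqrt (5 + Real.sqrt 10) ^ 2 = 5 + Real.sqrt 10 := Real.sq_sqrt (by linarith)
  have hb2 : Real.sqrt (5 - Real.sqrt 10) ^ 2 = 5 - Real.sqrt 10 := Real.sq_sqrt (by linarith)
  have hb : 0 < Real.sqrt (5 - Real.sqrt 10) := Real.sqrt_pos.mpr (by linarith)
  have hab : Real.sqrt (5 - Real.sqrt 10) < Real.sqrt (5 + Real.sqrt 10) :=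
    Real.sqrt_lt_sqrt (by linarith) (by linarith)
  generalize Real.sqrt (5 + Real.sqrt 10) = a at *
  generalize Real.sqrt (5 - Real.sqrt 10) = b at *
  generalize Real.sqrt 10 = r at *
  generalize Real.sqrt T = s at *
  have hroot : ∀ i : Fin 5, c i ^ 5 - 10 * c i ^ 3 + 15 * c i = 0 := by
    have hr : ∀ y t : ℝ, y ^ 2 = 5 + t → t ^ 2 = 10 → y ^ 5 - 10 * y ^ 3 + 15 * y = 0 := by
      intro y t h1 h2
      have : y ^ 5 - 10 * y ^ 3 + 15 * y = y * ((y ^ 2 - 5) ^ 2 - 10) := by ring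
      rw [this, h1, add_sub_cancel_left, h2]; ring
    intro i
    subst hc
    fin_cases i
    · norm_num
    · exact hr a r ha2 h10
    · exact hr (-a) r (by rw [neg_sq, ha2]) h10
    · exact hr b (-r) (by rw [hb2]; ring) (by rw [neg_sq, h10])
    · exact hr (-b) (-r) (by rw [neg_sq, hb2]; ring) (by rw [neg_sq, h10])
  have hcinj : Function.Injective c := by
    intro i j hij
    subst hc
    fin_cases i <;> fin_cases j <;> first | rfl | (exfalso; simp at hij; linarith)
  have hxinj : Function.Injective (fun i : Fin 5 => c i * s) := by
    intro i j hij
    exact hcinj (mul_right_cancel₀ hs.ne' hij)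
  refine ⟨?_, ?_, ?_, ?_⟩
  · intro l
    constructor
    · subst hM
      rw [hPT]
      simp [Matrix.det_succ_row_zero, Fin.sum_univ_succ, Fin.succAbove, Matrix.one_apply]
      field_simp
      ring
    · rw [aux_hermite5, ← hs2]
      field_simp
  · intro i
    rw [aux_hermite5, hroot]
  · intro i j hij
    exact hxinj (add_left_cancel hij)
  · let L : Matrix (Fin 5) (Fin 5) ℝ := !![ρ, 0, 0, 0, 0;
      0, 1, 0, 0, 0;
      0, 0, ρ / 2, 0, 0;
      0, -(T * ρ) / 2, 0, ρ / 6, 0;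
      ρ * T ^ 2 / 8, -f₃, -(ρ * T) / 4, 0, ρ / 24]
    have hL : L.det = ρ ^ 4 / 288 := by
      simp [L, Matrix.det_succ_row_zero, Fin.sum_univ_succ, Fin.succAbove]
      ring
    let V : Matrix (Fin 5) (Fin 5) ℝ := (Matrix.vandermonde (fun i : Fin 5 => c i * s))ᵀ
    have hV : V.det ≠ 0 := by
      simp only [V, Matrix.det_transpose]
      exact Matrix.det_vandermonde_ne_zero_iff.mpr hxinj
    have hU : IsUnit (L * V).det := by
      rw [Matrix.det_mul, hL, isUnit_iff_ne_zero]
      exact mul_ne_zero (by positivity) hV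
    refine ⟨L * V, hU, ?_⟩
    have key : M * (L * V) = (L * V) * Matrix.diagonal (fun i => u + c i * s) := by
      ext i j
      rw [Matrix.mul_diagonal]
      have h0 := hroot j
      subst hM
      rw [hPT]
      clear hL hV hU hroot hxinj hcinj hc
      generalize hcj : c j = y at *
      fin_cases i <;>
        simp [L, V, Matrix.mul_apply, Matrix.vecMul, dotProduct, Fin.sum_univ_succ, Matrix.vandermonde_apply, hcj] <;>
        field_simp
      · ring
      · ring
      · rw [← hs2]
        linear_combination (-384 * ρ * s ^ 5) * h0
    rw [Matrix.mul_assoc, key, ← Matrix.mul_assoc, Matrix.nonsing_inv_mul _ hU, Matrix.one_mul]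
end

section
/- Second-order initial change of the pressure due to the quantum correction: let V : ℝ → ℝ be smooth, ħ > 0, τ > 0, and let (ρ, u, P, f₃) be smooth real fields on ℝ × ℝ with ρ > 0 and P > 0, solving the M=3 quantum hydrodynamic system for all (t,x), with initial data ρ(0,x) = P(0,x) = e^{-V(x)}, u(0,x) = 0, f₃(0,x) = 0. Then ∂P/∂t(0,x) = 0 and ∂²P/∂t²(0,x) = -(ħ²/4) d/dx [ V'''(x) e^{-V(x)} ] for all x. -/
lemma aux_dx (F : ℝ → ℝ → ℝ) (hF : ContDiff ℝ (⊤ : ℕ∞) (Function.uncurry F)) (t x : ℝ) :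
    HasDerivAt (fun y => F t y) (fderiv ℝ (Function.uncurry F) (t, x) (0, 1)) x := by
  have h := (hF.differentiable (by simp) (t, x)).hasFDerivAt
  exact h.comp_hasDerivAt x ((hasDerivAt_const x t).prodMk (hasDerivAt_id x))

lemma aux_dt (F : ℝ → ℝ → ℝ) (hF : ContDiff ℝ (⊤ : ℕ∞) (Function.uncurry F)) (t x : ℝ) :
    HasDerivAt (fun s => F s x) (fderiv ℝ (Function.uncurry F) (t, x) (1, 0)) t := by
  have h := (hF.differentiable (by simp) (t, x)).hasFDerivAt
  exact h.comp_hasDerivAt t ((hasDerivAt_id t).prodMk (hasDerivAt_const t x))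

lemma aux_clm_dt (G : ℝ × ℝ → (ℝ × ℝ →L[ℝ] ℝ)) (G' : ℝ × ℝ →L[ℝ] (ℝ × ℝ →L[ℝ] ℝ))
    (t x : ℝ) (v : ℝ × ℝ) (h : HasFDerivAt G G' (t, x)) :
    HasDerivAt (fun s => G (s, x) v) (G' (1, 0) v) t := by
  have h1 : HasDerivAt (fun s => G (s, x)) (G' (1, 0)) t :=
    h.comp_hasDerivAt t ((hasDerivAt_id t).prodMk (hasDerivAt_const t x))
  simpa using h1.clm_apply (hasDerivAt_const t v)

lemma aux_clm_dx (G : ℝ × ℝ → (ℝ × ℝ →L[ℝ] ℝ)) (G' : ℝ × ℝ →L[ℝ] (ℝ × ℝ →L[ℝ] ℝ))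
    (t x : ℝ) (v : ℝ × ℝ) (h : HasFDerivAt G G' (t, x)) :
    HasDerivAt (fun y => G (t, y) v) (G' (0, 1) v) x := by
  have h1 : HasDerivAt (fun y => G (t, y)) (G' (0, 1)) x :=
    h.comp_hasDerivAt x ((hasDerivAt_const x t).prodMk (hasDerivAt_id x))
  simpa using h1.clm_apply (hasDerivAt_const x v)

lemma aux_mixed (F : ℝ → ℝ → ℝ) (hF : ContDiff ℝ (⊤ : ℕ∞) (Function.uncurry F)) (t x : ℝ) :
    HasDerivAt (fun s => deriv (fun y => F s y) x)
      (deriv (fun y => deriv (fun s => F s y) t) x) t := by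
  have h1 : (fun s => deriv (fun y => F s y) x) =
      fun s => fderiv ℝ (Function.uncurry F) (s, x) (0, 1) :=
    funext fun s => (aux_dx F hF s x).deriv
  have h2 : (fun y => deriv (fun s => F s y) t) =
      fun y => fderiv ℝ (Function.uncurry F) (t, y) (1, 0) :=
    funext fun y => (aux_dt F hF t y).deriv
  have hd : ContDiff ℝ 1 (fderiv ℝ (Function.uncurry F)) :=
    hF.fderiv_right (by norm_cast)
  have hh := (hd.differentiable (by simp) (t, x)).hasFDerivAt
  have hsym : IsSymmSndFDerivAt ℝ (Function.uncurry F) (t, x) :=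
    hF.contDiffAt.isSymmSndFDerivAt (by simp; exact WithTop.coe_le_coe.mpr le_top)
  have ht := aux_clm_dt _ _ t x (0, 1) hh
  have hx := aux_clm_dx _ _ t x (1, 0) hh
  rw [h1, h2, hx.deriv, ← hsym (1, 0) (0, 1)]
  exact ht

/-- Second-order initial change of the pressure due to the quantum correction: for smooth
fields solving the `M = 3` quantum hydrodynamic system with initial data
`rho(0,.) = P(0,.) = exp(-V)`, `u(0,.) = 0`, `f3(0,.) = 0`, one has `dP/dt(0,x) = 0` and
`d2P/dt2(0,x) = -(h^2/4) d/dx[V3(x) exp(-V(x))]`. -/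
theorem quantum_M3_pressure_initial_change (V : ℝ → ℝ) (hV : ContDiff ℝ (⊤ : ℕ∞) V)
    (ℏ τ : ℝ) (hℏ : 0 < ℏ) (hτ : 0 < τ)
    (ρ u P f₃ : ℝ → ℝ → ℝ)
    (hρS : ContDiff ℝ (⊤ : ℕ∞) (Function.uncurry ρ))
    (huS : ContDiff ℝ (⊤ : ℕ∞) (Function.uncurry u))
    (hPS : ContDiff ℝ (⊤ : ℕ∞) (Function.uncurry P))
    (hf₃S : ContDiff ℝ (⊤ : ℕ∞) (Function.uncurry f₃))
    (hρpos : ∀ t x : ℝ, 0 < ρ t x) (hPpos : ∀ t x : ℝ, 0 < P t x)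
    (heq1 : ∀ t x : ℝ, deriv (fun s => ρ s x) t + u t x * deriv (fun y => ρ t y) x +
      ρ t x * deriv (fun y => u t y) x = 0)
    (heq2 : ∀ t x : ℝ, ρ t x * deriv (fun s => u s x) t +
      ρ t x * u t x * deriv (fun y => u t y) x + deriv (fun y => P t y) x =
      -(ρ t x) * deriv V x)
    (heq3 : ∀ t x : ℝ, deriv (fun s => P s x / 2) t + u t x * deriv (fun y => P t y / 2) x +
      (3 / 2) * P t x * deriv (fun y => u t y) x + 3 * deriv (fun y => f₃ t y) x = 0)
    (heq4 : ∀ t x : ℝ, deriv (fun s => f₃ s x) t -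
      (P t x) ^ 2 / (2 * (ρ t x) ^ 2) * deriv (fun y => ρ t y) x +
      P t x / (2 * ρ t x) * deriv (fun y => P t y) x + u t x * deriv (fun y => f₃ t y) x =
      -(f₃ t x) / τ + (ℏ ^ 2 / 24) * iteratedDeriv 3 V x * ρ t x)
    (hρ0 : ∀ x : ℝ, ρ 0 x = Real.exp (-V x))
    (hP0 : ∀ x : ℝ, P 0 x = Real.exp (-V x))
    (hu0 : ∀ x : ℝ, u 0 x = 0)
    (hf₃0 : ∀ x : ℝ, f₃ 0 x = 0) :
    ∀ x : ℝ, deriv (fun s => P s x) 0 = 0 ∧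
      iteratedDeriv 2 (fun s => P s x) 0 =
        -(ℏ ^ 2 / 4) * deriv (fun y => iteratedDeriv 3 V y * Real.exp (-V y)) x := by
  intro x
  have hVd : Differentiable ℝ V := hV.differentiable (by simp)
  have hE : ∀ y, HasDerivAt (fun y => Real.exp (-V y)) (Real.exp (-V y) * -deriv V y) y :=
    fun y => (hVd y).hasDerivAt.neg.exp
  have hρ0f : (fun y => ρ 0 y) = fun y => Real.exp (-V y) := funext hρ0
  have hP0f : (fun y => P 0 y) = fun y => Real.exp (-V y) := funext hP0
  have hu0f : (fun y => u 0 y) = fun _ => (0 : ℝ) := funext hu0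
  have hf0f : (fun y => f₃ 0 y) = fun _ => (0 : ℝ) := funext hf₃0
  have hut : ∀ y, deriv (fun s => u s y) 0 = 0 := by
    intro y
    have h := heq2 0 y
    rw [hP0f, hu0f, (hE y).deriv, hu0, hρ0] at h
    simpa using h
  have hft : ∀ y, deriv (fun s => f₃ s y) 0 =
      (ℏ ^ 2 / 24) * (iteratedDeriv 3 V y * Real.exp (-V y)) := by
    intro y
    have h := heq4 0 y
    rw [hP0f, hρ0f, hf0f, (hE y).deriv, hu0, hρ0, hP0, hf₃0] at h
    have hp := (Real.exp_pos (-V y)).ne'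
    have e1 : Real.exp (-V y) ^ 2 / (2 * Real.exp (-V y) ^ 2) = 1 / 2 := by field_simp
    have e2 : Real.exp (-V y) / (2 * Real.exp (-V y)) = 1 / 2 := by field_simp
    rw [e1, e2] at h
    simp only [neg_zero, zero_div, zero_mul] at h
    linarith
  have hPt : (deriv fun s => P s x) = fun t => -(u t x * deriv (fun y => P t y) x) -
      3 * (P t x * deriv (fun y => u t y) x) - 6 * deriv (fun y => f₃ t y) x := by
    funext t
    have h := heq3 t x
    rw [deriv_div_const, deriv_div_const] at h
    linarith
  refine ⟨?_, ?_⟩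
  · rw [hPt]
    simp [hu0f, hf0f, hu0]
  · have hu := (aux_dt u huS 0 x).differentiableAt.hasDerivAt
    have hP := (aux_dt P hPS 0 x).differentiableAt.hasDerivAt
    have hD := (((hu.mul (aux_mixed P hPS 0 x)).neg.sub
      ((hP.mul (aux_mixed u huS 0 x)).const_mul 3)).sub
      ((aux_mixed f₃ hf₃S 0 x).const_mul 6))
    rw [iteratedDeriv_succ, iteratedDeriv_one, hPt]
    refine hD.deriv.trans ?_
    simp only [hut, hft, hu0, deriv_const, deriv_const_mul_field]
    ring
end
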